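/- arXiv:1104.2547 — 5 statements merged into one kernel-verified Lean document; each statement's English description precedes it below -/
import Mathlib

section
/- Let p ≥ 5 be a prime and let g be a generator of (ℤ/pℤ)ˣ; for x ∈ (ℤ/pℤ)ˣ let log_g(x) denote the unique element a ∈ ℤ/(p−1)ℤ with g^a = x. Then the set C₀^B = {{log_g(x), log_g(y)} : x,y ∈ (ℤ/pℤ)ˣ \ {1, 2⁻¹, 2, −1}, x + y = 1} ∪ {{log_g(2⁻¹), log_g(−1)}} defines a C-code of length p−1 in Z_{p−1} = ℤ/(p−1)ℤ: C₀^B consists of (p−3)/2 pairwise disjoint unordered pairs of nonzero elements of Z_{p−1}, and setting C_i = {{a+i, b+i} : {a,b} ∈ C₀^B} for i ∈ Z_{p−1}, for all m ≠ k in Z_{p−1} one has C_m ∩ C_k = ∅, the simple graph on vertex set Z_{p−1} with edge set C_m ∪ C_k contains no cycle, and m and k lie in different connected components of that graph. -/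
/-! Common definitions: C-codes, even starters, even 2-starters,
and bipyramidal (perfect) one-factorizations of the graph `G_{2n+2}`. -/

/-- Translate each unordered pair in `C` by `i`. -/
def shiftSet {m : ℕ} (i : ZMod m) (C : Set (Sym2 (ZMod m))) : Set (Sym2 (ZMod m)) :=
  (Sym2.map (· + i)) '' C

/-- `C` consists of `k` pairwise disjoint unordered pairs (2-element sets) of nonzero
elements of `ZMod m`. -/
def IsPairing (m k : ℕ) (C : Set (Sym2 (ZMod m))) : Prop :=
  C.ncard = k ∧ (∀ e ∈ C, ¬ e.IsDiag) ∧ (∀ e ∈ C, (0 : ZMod m) ∉ e) ∧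
    (∀ e ∈ C, ∀ e' ∈ C, e ≠ e' → ∀ a, a ∈ e → a ∉ e')

/-- The defining condition of a C-code with columns `C_i = i + C0`:
for all `a ≠ b`, the columns `C_a` and `C_b` are disjoint, the graph on `ZMod m`
with edge set `C_a ∪ C_b` has no cycle, and `a`, `b` are in different components. -/
def CCodeCond (m : ℕ) (C0 : Set (Sym2 (ZMod m))) : Prop :=
  ∀ a b : ZMod m, a ≠ b →
    shiftSet a C0 ∩ shiftSet b C0 = ∅ ∧
    (SimpleGraph.fromEdgeSet (shiftSet a C0 ∪ shiftSet b C0)).IsAcyclic ∧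
    ¬ (SimpleGraph.fromEdgeSet (shiftSet a C0 ∪ shiftSet b C0)).Reachable a b

/-- `C0` defines a C-code of length `2n`. -/
def IsCCode (n : ℕ) (C0 : Set (Sym2 (ZMod (2*n)))) : Prop :=
  IsPairing (2*n) (n-1) C0 ∧ CCodeCond (2*n) C0

/-- An even starter in `ZMod (2n)`. -/
def IsEvenStarter (n : ℕ) (S : Set (Sym2 (ZMod (2*n)))) : Prop :=
  IsPairing (2*n) (n-1) S ∧
  ∀ i : ZMod (2*n), i ≠ 0 → i ≠ (n : ZMod (2*n)) →
    ∃ x y : ZMod (2*n), s(x, y) ∈ S ∧ (i = x - y ∨ i = y - x)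

/-- An even starter in `ZMod m` for even `m`, phrased with `n = m / 2`. -/
def IsEvenStarterMod (m : ℕ) (S : Set (Sym2 (ZMod m))) : Prop :=
  IsPairing m (m / 2 - 1) S ∧
  ∀ i : ZMod m, i ≠ 0 → i ≠ ((m / 2 : ℕ) : ZMod m) →
    ∃ x y : ZMod m, s(x, y) ∈ S ∧ (i = x - y ∨ i = y - x)

/-- Vertices of `G_{2n+2}`: `Sum.inl i` for `i ∈ ZMod (2n)`, and `Sum.inr false = ∞₁`,
`Sum.inr true = ∞₂`. -/
abbrev Vtx (n : ℕ) : Type := ZMod (2*n) ⊕ Bool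

/-- The graph `G_{2n+2}`: all pairs of distinct vertices are adjacent except
`{∞₁, ∞₂}` and the pairs `{i, i+n}` for `i ∈ ZMod (2n)`. -/
def Ggraph (n : ℕ) : SimpleGraph (Vtx n) :=
  SimpleGraph.fromRel fun u v =>
    match u, v with
    | Sum.inl i, Sum.inl j => j ≠ i + (n : ZMod (2*n))
    | Sum.inl _, Sum.inr _ => True
    | Sum.inr _, Sum.inl _ => True
    | Sum.inr _, Sum.inr _ => False

/-- The permutation `σ^i` (rotation by `i` on `ZMod (2n)`, fixing `∞₁` and `∞₂`). -/
def vshift (n : ℕ) (i : ZMod (2*n)) : Vtx n → Vtx n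
  | Sum.inl x => Sum.inl (x + i)
  | Sum.inr b => Sum.inr b

/-- The involution swapping `∞₁` and `∞₂` and fixing all elements of `ZMod (2n)`. -/
def iotaSwap (n : ℕ) : Vtx n → Vtx n
  | Sum.inl x => Sum.inl x
  | Sum.inr b => Sum.inr (!b)

/-- `F` is a perfect matching (one-factor) of `G_{2n+2}`. -/
def IsOneFactor (n : ℕ) (F : Set (Sym2 (Vtx n))) : Prop :=
  F ⊆ (Ggraph n).edgeSet ∧ ∀ v : Vtx n, ∃! e, e ∈ F ∧ v ∈ e

/-- A bipyramidal one-factorization of `G_{2n+2}`: `2n` pairwise edge-disjoint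
one-factors whose union is the whole edge set, with `F i = σ^i (F 0)`. -/
def IsBipyramidalOF (n : ℕ) (F : ZMod (2*n) → Set (Sym2 (Vtx n))) : Prop :=
  (∀ i, IsOneFactor n (F i)) ∧ (∀ i j, i ≠ j → F i ∩ F j = ∅) ∧
    (⋃ i, F i) = (Ggraph n).edgeSet ∧
    ∀ i, F i = (Sym2.map (vshift n i)) '' (F 0)

/-- The graph with edge set `E` is a Hamiltonian cycle: it is connected and every
vertex has degree 2. -/
def IsHamCycleOn {V : Type} (E : Set (Sym2 V)) : Prop :=
  (SimpleGraph.fromEdgeSet E).Connected ∧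
    ∀ v : V, ((SimpleGraph.fromEdgeSet E).neighborSet v).ncard = 2

/-- A bipyramidal perfect one-factorization of `G_{2n+2}`. -/
def IsBipyramidalP1F (n : ℕ) (F : ZMod (2*n) → Set (Sym2 (Vtx n))) : Prop :=
  IsBipyramidalOF n F ∧ ∀ j k, j ≠ k → IsHamCycleOn (F j ∪ F k)

/-- An even starter in the multiplicative group `(ZMod p)ˣ`. -/
def IsMulEvenStarter (p : ℕ) (S : Set (Sym2 ((ZMod p)ˣ))) : Prop :=
  S.ncard = (p - 3) / 2 ∧ (∀ e ∈ S, ¬ e.IsDiag) ∧ (∀ e ∈ S, (1 : (ZMod p)ˣ) ∉ e) ∧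
    (∀ e ∈ S, ∀ e' ∈ S, e ≠ e' → ∀ a, a ∈ e → a ∉ e') ∧
    ∀ u : (ZMod p)ˣ, u ≠ 1 → u ≠ -1 →
      ∃ x y : (ZMod p)ˣ, s(x, y) ∈ S ∧ (u = x⁻¹ * y ∨ u = x * y⁻¹)

/-- The number of pairs in `S` whose difference (in either order) is `d`. -/
noncomputable def diffCount (m : ℕ) (d : ℕ) (S : Set (Sym2 (ZMod m))) : ℕ :=
  {e ∈ S | ∃ x y : ZMod m, e = s(x, y) ∧
    (y - x = (d : ZMod m) ∨ x - y = (d : ZMod m))}.ncard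

/-- `(S0, S1)` is an even 2-starter in `ZMod (2n)`: each `Sᵢ` consists of `n-1`
unordered pairs of elements of `ZMod (2n) \ {i}`, and every `d` with `1 ≤ d ≤ n-1`
occurs exactly twice as a difference of a pair, counted over both sets. -/
def IsEven2Starter (n : ℕ) (S0 S1 : Set (Sym2 (ZMod (2*n)))) : Prop :=
  S0.ncard = n - 1 ∧ S1.ncard = n - 1 ∧
    (∀ e ∈ S0, ¬ e.IsDiag) ∧ (∀ e ∈ S1, ¬ e.IsDiag) ∧
    (∀ e ∈ S0, (0 : ZMod (2*n)) ∉ e) ∧ (∀ e ∈ S1, (1 : ZMod (2*n)) ∉ e) ∧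
    ∀ d : ℕ, 1 ≤ d → d ≤ n - 1 →
      diffCount (2*n) d S0 + diffCount (2*n) d S1 = 2

/-- The `i`-th column induced by `(S0, S1)`:
`C_i = {{x + 2⌊ī/2⌋, y + 2⌊ī/2⌋} : {x,y} ∈ S_{ī mod 2}}` where `ī = i.val`. -/
def qCol (n : ℕ) (S0 S1 : Set (Sym2 (ZMod (2*n)))) (i : ZMod (2*n)) :
    Set (Sym2 (ZMod (2*n))) :=
  (Sym2.map (· + ((2 * (i.val / 2) : ℕ) : ZMod (2*n)))) ''
    (if i.val % 2 = 0 then S0 else S1)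

/-- The quasi-C-code condition for the column family induced by `(S0, S1)`. -/
def QuasiCCodeCond (n : ℕ) (S0 S1 : Set (Sym2 (ZMod (2*n)))) : Prop :=
  ∀ a b : ZMod (2*n), a ≠ b →
    qCol n S0 S1 a ∩ qCol n S0 S1 b = ∅ ∧
    (SimpleGraph.fromEdgeSet (qCol n S0 S1 a ∪ qCol n S0 S1 b)).IsAcyclic ∧
    ¬ (SimpleGraph.fromEdgeSet (qCol n S0 S1 a ∪ qCol n S0 S1 b)).Reachable a b

set_option linter.unusedSectionVars false

/-- the matching relation attached to `A` -/
def MRel {F : Type} [Field F] (A x y : F) : Prop :=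
  (x + y = A ∧ x ≠ y ∧ x ≠ 2 * A ∧ x ≠ -A) ∨ (2 * x = A ∧ y = -A) ∨ (x = -A ∧ 2 * y = A)

section fieldlemmas
variable {F : Type} [Field F] (h2 : (2 : F) ≠ 0) (h3 : (3 : F) ≠ 0)

theorem MRel.symm' {A x y : F} (h : MRel A x y) : MRel A y x := by
  rcases h with ⟨h, h', h'', h'''⟩ | ⟨h, h'⟩ | ⟨h, h'⟩
  · refine Or.inl ⟨by rw [add_comm]; exact h, h'.symm, ?_, ?_⟩
    · intro e; apply h'''; linear_combination h - e
    · intro e; apply h''; linear_combination h - e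
  · exact Or.inr (Or.inr ⟨h', h⟩)
  · exact Or.inr (Or.inl ⟨h', h⟩)

include h2 h3 in
theorem MRel.ne' {A x y : F} (hA : A ≠ 0) (h : MRel A x y) : x ≠ y := by
  have h3A : 3 * A ≠ 0 := mul_ne_zero h3 hA
  rcases h with ⟨h, h', h'', h'''⟩ | ⟨h, h'⟩ | ⟨h, h'⟩
  · exact h'
  · intro e; apply h3A; linear_combination -h + 2 * e + 2 * h'
  · intro e; apply h3A; linear_combination -h' - 2 * e + 2 * h

include h2 h3 in
theorem MRel.func {A x y y' : F} (hA : A ≠ 0) (h : MRel A x y) (h' : MRel A x y') : y = y' := by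
  have h3A : 3 * A ≠ 0 := mul_ne_zero h3 hA
  rcases h with ⟨h, hb, hc, hd⟩ | ⟨h, hb⟩ | ⟨h, hb⟩ <;>
  rcases h' with ⟨k, kb, kc, kd⟩ | ⟨k, kb⟩ | ⟨k, kb⟩
  · linear_combination h - k
  · exact absurd (by linear_combination k - h) hb
  · exact absurd k hd
  · exact absurd (by linear_combination h - k) kb
  · rw [hb, kb]
  · exact absurd (by linear_combination -h + 2 * k) h3A
  · exact absurd h kd
  · exact absurd (by linear_combination -k + 2 * h) h3A
  · apply mul_left_cancel₀ h2; rw [hb, kb]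

include h2 h3 in
theorem MRel.two {A x y : F} (hA : A ≠ 0) (h : MRel A x y) : x ≠ 2 * A := by
  have h3A : 3 * A ≠ 0 := mul_ne_zero h3 hA
  rintro rfl
  rcases h with ⟨h, hb, hc, hd⟩ | ⟨h, hb⟩ | ⟨h, hb⟩
  · exact hc rfl
  · apply h3A; linear_combination h
  · apply h3A; linear_combination h

include h2 h3 in
theorem MRel.disj {A B x y : F} (hA : A ≠ 0) (hB : B ≠ 0) (hAB : A ≠ B)
    (h : MRel A x y) (h' : MRel B x y) : False := by
  have h3A : 3 * A ≠ 0 := mul_ne_zero h3 hA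
  have h3B : 3 * B ≠ 0 := mul_ne_zero h3 hB
  rcases h with ⟨h, hb, hc, hd⟩ | ⟨h, hb⟩ | ⟨h, hb⟩ <;>
  rcases h' with ⟨k, kb, kc, kd⟩ | ⟨k, kb⟩ | ⟨k, kb⟩
  · exact hAB (by linear_combination k - h)
  · apply hd; linear_combination -h + k + kb
  · apply hc; linear_combination 2 * h - k - kb
  · apply kd; linear_combination -k + h + hb
  · exact hAB (by linear_combination k - h)
  · apply h3A; linear_combination h + 4 * hb - 2 * k - 2 * kb
  · apply kc; linear_combination 2 * k - h - hb
  · apply h3B; linear_combination k + 4 * kb - 2 * h - 2 * hb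
  · exact hAB (by linear_combination kb - hb)

theorem MRel.scale {A x y : F} (hA : A ≠ 0) : MRel A (A * x) (A * y) ↔ MRel 1 x y := by
  unfold MRel
  have e1 : A * x + A * y = A ↔ x + y = 1 := by
    rw [← mul_add]; constructor
    · intro h; apply mul_left_cancel₀ hA; rw [h, mul_one]
    · intro h; rw [h, mul_one]
  have e2 : ∀ u v : F, A * u = A * v ↔ u = v := fun u v => mul_right_inj' hA
  have e3 : ∀ u : F, 2 * (A * u) = A ↔ 2 * u = 1 := fun u => by
    rw [← e2 (2 * u) 1]; ring_nf
  have e4 : ∀ u : F, A * u = -A ↔ u = -1 := fun u => by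
    rw [← e2 u (-1)]; ring_nf
  have e5 : A * x = 2 * A ↔ x = 2 * 1 := by
    rw [← e2 x (2*1)]; ring_nf
  rw [e1, e3, e3, e4, e4, Ne, Ne, Ne, e2, e4, e5]

end fieldlemmas

/-- the tree -/
def TG {F : Type} [Field F] (A B : F) (hA : ∀ x y, MRel A x y → x ≠ y)
    (hB : ∀ x y, MRel B x y → x ≠ y) : SimpleGraph F where
  Adj x y := MRel A x y ∨ MRel B x y
  symm := ⟨fun _ _ h => h.imp MRel.symm' MRel.symm'⟩
  loopless := ⟨fun _ h => h.elim (fun h => hA _ _ h rfl) (fun h => hB _ _ h rfl)⟩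

theorem even_of_invol {F : Type} [DecidableEq F] (S : Finset F) (f : F → F)
    (hf : ∀ x ∈ S, f x ∈ S) (hff : ∀ x, f (f x) = x) (hne : ∀ x ∈ S, f x ≠ x) :
    Even S.card := by
  have : ∑ x ∈ S, (1 : ZMod 2) = 0 :=
    Finset.sum_involution (fun x _ => f x) (fun _ _ => by decide) (fun x hx _ => hne x hx)
      (fun x hx => hf x hx) (fun x _ => hff x)
  simp at this
  rwa [ZMod.natCast_eq_zero_iff_even] at this

theorem all_of_closed {p : ℕ} [Fact p.Prime] (S : Set (ZMod p)) (d : ZMod p) (hd : d ≠ 0)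
    (hS : ∀ x ∈ S, x + d ∈ S) (x0 : ZMod p) (hx0 : x0 ∈ S) (y : ZMod p) : y ∈ S := by
  have h : ∀ n : ℕ, x0 + n * d ∈ S := by
    intro n
    induction n with
    | zero => simpa using hx0
    | succ k ih =>
      have := hS _ ih
      have e : x0 + ((k + 1 : ℕ) : ZMod p) * d = x0 + k * d + d := by push_cast; ring
      rw [e]; exact this
  have := h ((y - x0) / d).val
  rw [ZMod.natCast_zmod_val] at this
  have e : x0 + (y - x0) / d * d = y := by field_simp; ring
  rwa [e] at this

section tree
variable {p : ℕ} [Fact p.Prime] (h2 : (2 : ZMod p) ≠ 0) (h3 : (3 : ZMod p) ≠ 0)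
  {A B : ZMod p} (hA : A ≠ 0) (hB : B ≠ 0) (hAB : A ≠ B)
  (cA : ∀ x y, MRel A x y → x ≠ y)
  (cB : ∀ x y, MRel B x y → x ≠ y)

include h2 h3 hA hB in
open Classical in
theorem par_K (K : Finset (ZMod p)) (hK : ∀ x ∈ K, ∀ y, MRel A x y ∨ MRel B x y → y ∈ K)
    (n1 : A / 2 ∉ K) (n2 : - A ∉ K) : Even (K.erase (2 * A)).card := by
  apply even_of_invol _ (fun x => A - x)
  · intro x hx
    rw [Finset.mem_erase] at hx ⊢
    refine ⟨?_, ?_⟩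
    · intro e
      have : x = -A := by linear_combination -e
      exact n2 (this ▸ hx.2)
    · apply hK x hx.2
      left; left
      refine ⟨by ring, ?_, hx.1, ?_⟩
      · intro e
        have : x = A / 2 := by field_simp; linear_combination e
        exact n1 (this ▸ hx.2)
      · intro e; exact n2 (e ▸ hx.2)
  · intro x; ring
  · intro x hx e
    rw [Finset.mem_erase] at hx
    have : x = A / 2 := by field_simp; linear_combination -e
    exact n1 (this ▸ hx.2)

include h2 h3 hA hB hAB in
theorem K_empty (K : Set (ZMod p)) (hK : ∀ x ∈ K, ∀ y, MRel A x y ∨ MRel B x y → y ∈ K)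
    (n1 : A / 2 ∉ K) (n2 : - A ∉ K) (n3 : B / 2 ∉ K) (n4 : - B ∉ K) : K = ∅ := by
  classical
  have hd : B - A ≠ 0 := sub_ne_zero.2 hAB.symm
  rw [Set.eq_empty_iff_forall_notMem]
  intro x0 hx0
  have stepA : ∀ x ∈ K, x ≠ 2 * A → A - x ∈ K := by
    intro x hx hne
    apply hK x hx
    left; left
    refine ⟨by ring, ?_, hne, ?_⟩
    · intro e
      have : x = A / 2 := by field_simp; linear_combination e
      exact n1 (this ▸ hx)
    · intro e; exact n2 (e ▸ hx)
  have stepB : ∀ x ∈ K, x ≠ 2 * B → B - x ∈ K := by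
    intro x hx hne
    apply hK x hx
    right; left
    refine ⟨by ring, ?_, hne, ?_⟩
    · intro e
      have : x = B / 2 := by field_simp; linear_combination e
      exact n3 (this ▸ hx)
    · intro e; exact n4 (e ▸ hx)
  have p1 := par_K h2 h3 hA hB K.toFinset (by simpa using hK) (by simpa using n1) (by simpa using n2)
  have p2 := par_K (A := B) (B := A) h2 h3 hB hA K.toFinset
    (by simpa [or_comm] using hK) (by simpa using n3) (by simpa using n4)
  have key : 2 * A ∈ K ↔ 2 * B ∈ K := by
    constructor
    · intro h
      by_contra h'
      rw [Finset.card_erase_of_mem (by simpa using h)] at p1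
      rw [Finset.erase_eq_of_notMem (by simpa using h')] at p2
      have : 0 < K.toFinset.card := Finset.card_pos.2 ⟨2 * A, by simpa using h⟩
      grind
    · intro h
      by_contra h'
      rw [Finset.card_erase_of_mem (by simpa using h)] at p2
      rw [Finset.erase_eq_of_notMem (by simpa using h')] at p1
      have : 0 < K.toFinset.card := Finset.card_pos.2 ⟨2 * B, by simpa using h⟩
      grind
  by_cases hm : 2 * A ∈ K
  · have hm' := key.1 hm
    have d1 : 2 * A ≠ -B := fun e => n4 (e ▸ hm)
    have d2 : 2 * B ≠ -A := fun e => n2 (e ▸ hm')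
    have hall := all_of_closed (K ∪ {-A, A + B, -B}) (B - A) hd (by
      have cA : ∀ x ∈ K ∪ {-A, A + B, -B}, A - x ∈ K ∪ {-A, A + B, -B} := by
        rintro x (hx | rfl | rfl | rfl)
        · by_cases e : x = 2 * A
          · right; left; rw [e]; ring
          · left; exact stepA x hx e
        · left; convert hm using 1; ring
        · right; right; right; show _ = _; ring
        · right; right; left; ring
      have cB : ∀ x ∈ K ∪ {-A, A + B, -B}, B - x ∈ K ∪ {-A, A + B, -B} := by
        rintro x (hx | rfl | rfl | rfl)
        · by_cases e : x = 2 * B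
          · right; right; right; rw [e]; show _ = _; ring
          · left; exact stepB x hx e
        · right; right; left; ring
        · right; left; ring
        · left; convert hm' using 1; ring
      intro x hx
      have := cB _ (cA x hx)
      convert this using 1; ring) x0 (Or.inl hx0) (A / 2)
    have h3A : 3 * A ≠ 0 := mul_ne_zero h3 hA
    rcases hall with h | h | h | h
    · exact n1 h
    · apply h3; field_simp at h; linear_combination h
    · apply d2; field_simp at h; linear_combination -h
    · apply d2; replace h : A / 2 = -B := h; field_simp at h; linear_combination h
  · have hm' := fun h => hm (key.2 h)
    exact n1 (all_of_closed K (B - A) hd (by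
      intro x hx
      have h1 := stepA x hx (fun e => hm (e ▸ hx))
      have := stepB _ h1 (fun e => hm' (e ▸ h1))
      convert this using 1; ring) x0 hx0 (A / 2))

include h2 h3 hA hB hAB in
theorem TG_conn : (TG A B cA cB).Connected := by
  set T := TG A B cA cB with hT
  have adjA : ∀ x y, MRel A x y → T.Reachable x y := fun x y h =>
    SimpleGraph.Adj.reachable (G := T) (Or.inl h)
  have adjB : ∀ x y, MRel B x y → T.Reachable x y := fun x y h =>
    SimpleGraph.Adj.reachable (G := T) (Or.inr h)
  have r1 : T.Reachable (A / 2) (-A) := adjA _ _ (Or.inr (Or.inl ⟨by field_simp, rfl⟩))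
  have r2 : T.Reachable (B / 2) (-B) := adjB _ _ (Or.inr (Or.inl ⟨by field_simp, rfl⟩))
  have r3 : T.Reachable (-A) (-B) := by
    by_cases e1 : A = -2 * B
    · have : -B = A / 2 := by field_simp; linear_combination -e1
      rw [this]; exact r1.symm
    by_cases e2 : B = -2 * A
    · have : -A = B / 2 := by field_simp; linear_combination -e2
      rw [this]; exact r2
    have h3A : 3 * A ≠ 0 := mul_ne_zero h3 hA
    refine (adjB (-A) (A + B) (Or.inl ⟨by ring, ?_, ?_, ?_⟩)).trans
      (adjA (-B) (A + B) (Or.inl ⟨by ring, ?_, ?_, ?_⟩)).symm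
    · intro e; apply e2; linear_combination -e
    · intro e; apply e1; linear_combination -e
    · intro e; apply hAB; linear_combination -e
    · intro e; apply e1; linear_combination -e
    · intro e; apply e2; linear_combination -e
    · intro e; apply hAB; linear_combination e
  have all : ∀ x, T.Reachable x (-A) := by
    intro x
    by_contra hx
    have := K_empty h2 h3 hA hB hAB {y | T.Reachable x y} (by
      intro u hu y huy
      exact SimpleGraph.Reachable.trans hu (SimpleGraph.Adj.reachable (G := T) huy))
      (fun h => hx (SimpleGraph.Reachable.trans h r1)) hx
      (fun h => hx (SimpleGraph.Reachable.trans h (r2.trans r3.symm)))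
      (fun h => hx (SimpleGraph.Reachable.trans h r3.symm))
    have h : x ∈ {y | T.Reachable x y} := SimpleGraph.Reachable.refl x
    rw [this] at h
    exact h
  exact (SimpleGraph.connected_iff _).2 ⟨fun x y => (all x).trans (all y).symm, ⟨0⟩⟩

include h2 h3 hA in
open Classical in
theorem sum_le : ∑ x : ZMod p, (Finset.univ.filter (fun y => MRel A x y)).card ≤ p - 1 := by
  have hle : ∀ x : ZMod p, (Finset.univ.filter (fun y => MRel A x y)).card ≤
      if x = 2 * A then 0 else 1 := by
    intro x
    split_ifs with h
    · simp only [Nat.le_zero, Finset.card_eq_zero, Finset.filter_eq_empty_iff]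
      intro y _ hy
      exact MRel.two h2 h3 hA hy h
    · rw [Finset.card_le_one]
      intro y hy y' hy'
      simp at hy hy'
      exact MRel.func h2 h3 hA hy hy'
  refine (Finset.sum_le_sum fun x _ => hle x).trans ?_
  rw [Finset.sum_ite]
  simp [Finset.filter_ne', ZMod.card]

include h2 h3 hA hB hAB in
theorem TG_tree : (TG A B cA cB).IsTree := by
  classical
  have hc := TG_conn h2 h3 hA hB hAB cA cB
  rw [SimpleGraph.isTree_iff_connected_and_card]
  refine ⟨hc, le_antisymm ?_ hc.card_vert_le_card_edgeSet_add_one⟩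
  have hs := (TG A B cA cB).sum_degrees_eq_twice_card_edges
  have hdeg : ∀ x, (TG A B cA cB).degree x ≤ (Finset.univ.filter (fun y => MRel A x y)).card
      + (Finset.univ.filter (fun y => MRel B x y)).card := by
    intro x
    rw [← SimpleGraph.card_neighborFinset_eq_degree]
    refine le_trans (Finset.card_le_card ?_) (Finset.card_union_le _ _)
    intro y hy
    rw [SimpleGraph.mem_neighborFinset] at hy
    simp only [Finset.mem_union, Finset.mem_filter, Finset.mem_univ, true_and]
    exact hy
  have h := Finset.sum_le_sum (s := Finset.univ) (fun x _ => hdeg x)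
  rw [Finset.sum_add_distrib, hs] at h
  have := sum_le h2 h3 hA
  have := sum_le h2 h3 hB
  have hp : 2 ≤ p := (Fact.out : p.Prime).two_le
  rw [Nat.card_eq_fintype_card, Nat.card_eq_fintype_card, ZMod.card, ← SimpleGraph.edgeFinset_card]
  omega

end tree

/-- Let `g` generate `(ZMod p)ˣ`, `p ≥ 5` prime, `L` the discrete
logarithm to base `g` valued in `ZMod (p-1)`, and `z` the unit with value `2⁻¹`. Then
`C₀^B = {{L x, L y} : x, y ∈ (ZMod p)ˣ \ {1, 2⁻¹, 2, -1}, x + y = 1} ∪ {{L 2⁻¹, L (-1)}}`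
consists of `(p-3)/2` pairwise disjoint unordered pairs of nonzero elements of
`ZMod (p-1)` and defines a C-code of length `p-1`. -/
theorem stmt13 (p : ℕ) [Fact p.Prime] (hp : 5 ≤ p)
    (g : (ZMod p)ˣ) (hg : ∀ u : (ZMod p)ˣ, u ∈ Subgroup.zpowers g)
    (L : (ZMod p)ˣ → ZMod (p - 1)) (hL : ∀ x : (ZMod p)ˣ, g ^ (L x).val = x)
    (z : (ZMod p)ˣ) (hz : (z : ZMod p) = (2 : ZMod p)⁻¹)
    (C0B : Set (Sym2 (ZMod (p - 1))))
    (hC0B : C0B = {e | ∃ x y : (ZMod p)ˣ, e = s(L x, L y) ∧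
        (x : ZMod p) ∉ ({1, (2 : ZMod p)⁻¹, 2, -1} : Set (ZMod p)) ∧
        (y : ZMod p) ∉ ({1, (2 : ZMod p)⁻¹, 2, -1} : Set (ZMod p)) ∧
        (x : ZMod p) + (y : ZMod p) = 1} ∪ {s(L z, L (-1 : (ZMod p)ˣ))}) :
    IsPairing (p - 1) ((p - 3) / 2) C0B ∧ CCodeCond (p - 1) C0B := by
  classical
  have hpp : p.Prime := Fact.out
  have h2 : (2 : ZMod p) ≠ 0 := by
    intro h
    have : ((2 : ℕ) : ZMod p) = 0 := by exact_mod_cast h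
    rw [ZMod.natCast_eq_zero_iff] at this
    have := Nat.le_of_dvd (by norm_num) this
    omega
  have h3 : (3 : ZMod p) ≠ 0 := by
    intro h
    have : ((3 : ℕ) : ZMod p) = 0 := by exact_mod_cast h
    rw [ZMod.natCast_eq_zero_iff] at this
    have := Nat.le_of_dvd (by norm_num) this
    omega
  have : NeZero (p - 1) := ⟨by omega⟩
  have hord : g ^ (p - 1) = 1 := ZMod.units_pow_card_sub_one_eq_one p g
  let ℓ : ZMod (p - 1) → ZMod p := fun i => ((g ^ i.val : (ZMod p)ˣ) : ZMod p)
  have ℓne : ∀ i, ℓ i ≠ 0 := fun i => Units.ne_zero _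
  have ℓL : ∀ x : (ZMod p)ˣ, ℓ (L x) = x := fun x => by simp only [ℓ, hL]
  have surj : Function.Surjective (fun i : ZMod (p - 1) => g ^ i.val) := fun x => ⟨L x, hL x⟩
  have hbij : Function.Bijective (fun i : ZMod (p - 1) => g ^ i.val) := by
    rw [Fintype.bijective_iff_surjective_and_card]
    refine ⟨surj, ?_⟩
    rw [ZMod.card, ZMod.card_units]
  have ℓinj : Function.Injective ℓ := fun i j h => hbij.1 (Units.ext h)
  have ℓsurj : ∀ x : ZMod p, x ≠ 0 → ∃ i, ℓ i = x := fun x hx =>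
    ⟨L (Units.mk0 x hx), by rw [ℓL]; rfl⟩
  have ℓadd : ∀ i j, ℓ (i + j) = ℓ i * ℓ j := by
    intro i j
    simp only [ℓ]
    rw [← Units.val_mul, ← pow_add, ZMod.val_add, ← pow_mod_orderOf g, ← pow_mod_orderOf g (i.val + j.val),
      Nat.mod_mod_of_dvd _ (orderOf_dvd_of_pow_eq_one hord)]
  have ℓ0 : ℓ 0 = 1 := by simp [ℓ]
  have LL : ∀ i, ∃ x : (ZMod p)ˣ, L x = i ∧ (x : ZMod p) = ℓ i := fun i =>
    ⟨g ^ i.val, ℓinj (by rw [ℓL]), rfl⟩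
  have z2 : 2 * (z : ZMod p) = 1 := by rw [hz]; exact mul_inv_cancel₀ h2
  have hinv : ∀ x : ZMod p, x = 2⁻¹ ↔ 2 * x = 1 := fun x => by
    rw [← hz]
    constructor
    · rintro rfl; exact z2
    · intro h; apply mul_left_cancel₀ h2; rw [h, z2]
  have n11 : (1 : ZMod p) ≠ 0 := one_ne_zero
  -- membership in C0B
  have mem0 : ∀ i j, s(i, j) ∈ C0B ↔ MRel 1 (ℓ i) (ℓ j) := by
    intro i j
    rw [hC0B]
    constructor
    · rintro (⟨x, y, he, hx, hy, hxy⟩ | he)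
      · simp only [Set.mem_insert_iff, Set.mem_singleton_iff, not_or, hinv] at hx hy
        have hM : MRel 1 (x : ZMod p) y := by
          refine Or.inl ⟨hxy, ?_, by rw [mul_one]; exact hx.2.2.1, hx.2.2.2⟩
          intro e; apply hx.2.1; linear_combination hxy + e
        rw [Sym2.eq_iff] at he
        rcases he with ⟨rfl, rfl⟩ | ⟨rfl, rfl⟩
        · rw [ℓL, ℓL]; exact hM
        · rw [ℓL, ℓL]; exact hM.symm'
      · have hM : MRel 1 (z : ZMod p) ((-1 : (ZMod p)ˣ) : ZMod p) :=
          Or.inr (Or.inl ⟨z2, by simp⟩)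
        rw [Set.mem_singleton_iff, Sym2.eq_iff] at he
        rcases he with ⟨rfl, rfl⟩ | ⟨rfl, rfl⟩
        · rw [ℓL, ℓL]; exact hM
        · rw [ℓL, ℓL]; exact hM.symm'
    · intro h
      obtain ⟨x, hx, hx'⟩ := LL i
      obtain ⟨y, hy, hy'⟩ := LL j
      have hx0 := ℓne i
      have hy0 := ℓne j
      have sp : ∀ u v : (ZMod p)ˣ, 2 * (u : ZMod p) = 1 → (v : ZMod p) = -1 → u = z ∧ v = -1 := by
        intro u v hu hv
        exact ⟨Units.ext (by apply mul_left_cancel₀ h2; rw [hu, z2]), Units.ext (by simpa using hv)⟩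
      rw [← hx', ← hy'] at h
      rw [← hx'] at hx0
      rw [← hy'] at hy0
      rcases h with ⟨h, hb, hc, hd⟩ | ⟨h, hb⟩ | ⟨h, hb⟩
      · left
        refine ⟨x, y, by rw [hx, hy], ?_, ?_, h⟩
        · simp only [Set.mem_insert_iff, Set.mem_singleton_iff, not_or, hinv]
          refine ⟨?_, ?_, ?_, hd⟩
          · intro e; apply hy0; linear_combination h - e
          · intro e; apply hb; linear_combination e - h
          · intro e; apply hc; rw [e, mul_one]
        · simp only [Set.mem_insert_iff, Set.mem_singleton_iff, not_or, hinv]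
          refine ⟨?_, ?_, ?_, ?_⟩
          · intro e; apply hx0; linear_combination h - e
          · intro e; apply hb; linear_combination h - e
          · intro e; apply hd; linear_combination h - e
          · intro e; apply hc; linear_combination h - e
      · right
        obtain ⟨rfl, rfl⟩ := sp x y h hb
        rw [← hx, ← hy]; rfl
      · right
        obtain ⟨rfl, rfl⟩ := sp y x hb h
        rw [← hx, ← hy, Sym2.eq_swap]; rfl
  have memS : ∀ a i j, s(i, j) ∈ shiftSet a C0B ↔ MRel (ℓ a) (ℓ i) (ℓ j) := by
    intro a i j
    have hs : ∀ i, ℓ i = ℓ a * ℓ (i - a) := fun i => by rw [← ℓadd]; congr 1; ring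
    rw [hs i, hs j, MRel.scale (ℓne a), ← mem0]
    unfold shiftSet
    constructor
    · rintro ⟨e, he, h⟩
      induction e using Sym2.ind with
      | _ u v =>
        rw [Sym2.map_mk, Sym2.eq_iff] at h
        rcases h with ⟨rfl, rfl⟩ | ⟨rfl, rfl⟩
        · simpa using he
        · rw [Sym2.eq_swap]; simpa using he
    · intro h
      exact ⟨_, h, by simp⟩
  have ne1 : ∀ x y : ZMod p, MRel 1 x y → x ≠ y := fun x y h => h.ne' h2 h3 n11
  refine ⟨⟨?_, ?_, ?_, ?_⟩, ?_⟩
  · -- cardinality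
    let Q : SimpleGraph (ZMod (p - 1)) :=
      { Adj := fun i j => MRel 1 (ℓ i) (ℓ j)
        symm := ⟨fun _ _ h => h.symm'⟩
        loopless := ⟨fun _ h => ne1 _ _ h rfl⟩ }
    have hQ : C0B = (Q.edgeFinset : Set (Sym2 (ZMod (p - 1)))) := by
      ext e
      induction e using Sym2.ind with
      | _ u v => rw [mem0, SimpleGraph.coe_edgeFinset, SimpleGraph.mem_edgeSet]
    rw [hQ, Set.ncard_coe_finset]
    have hs := Q.sum_degrees_eq_twice_card_edges
    obtain ⟨t, ht⟩ := ℓsurj 2 h2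
    have h0t : (0 : ZMod (p - 1)) ≠ t := by
      rintro rfl
      rw [ℓ0] at ht
      apply n11; linear_combination -ht
    have hdeg : ∀ i, Q.degree i = if i ∈ ({0, t} : Finset (ZMod (p - 1))) then 0 else 1 := by
      intro i
      rw [← SimpleGraph.card_neighborFinset_eq_degree]
      split_ifs with h
      · rw [Finset.card_eq_zero, Finset.eq_empty_iff_forall_notMem]
        intro j hj
        rw [SimpleGraph.mem_neighborFinset] at hj
        replace hj : MRel 1 (ℓ i) (ℓ j) := hj
        simp only [Finset.mem_insert, Finset.mem_singleton] at h
        rcases h with rfl | rfl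
        · rw [ℓ0] at hj
          rcases hj with ⟨h, hb, hc, hd⟩ | ⟨h, hb⟩ | ⟨h, hb⟩
          · apply ℓne j; linear_combination h
          · apply n11; linear_combination h
          · apply h2; linear_combination h
        · exact MRel.two h2 h3 n11 hj (by rw [ht, mul_one])
      · simp only [Finset.mem_insert, Finset.mem_singleton, not_or] at h
        have hi1 : ℓ i ≠ 1 := fun e => h.1 (ℓinj (by rw [e, ℓ0]))
        have hi2 : ℓ i ≠ 2 := fun e => h.2 (ℓinj (by rw [e, ht]))
        have ex : ∃ y, y ≠ 0 ∧ MRel 1 (ℓ i) y := by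
          by_cases e1 : 2 * ℓ i = 1
          · exact ⟨-1, neg_ne_zero.2 n11, Or.inr (Or.inl ⟨e1, rfl⟩)⟩
          by_cases e2 : ℓ i = -1
          · exact ⟨z, z.ne_zero, Or.inr (Or.inr ⟨e2, z2⟩)⟩
          refine ⟨1 - ℓ i, fun e => hi1 (by linear_combination -e),
            Or.inl ⟨by ring, fun e => e1 (by linear_combination e), by rw [mul_one]; exact hi2, e2⟩⟩
        obtain ⟨y, hy0, hy⟩ := ex
        obtain ⟨j, rfl⟩ := ℓsurj y hy0
        rw [Finset.card_eq_one]
        refine ⟨j, ?_⟩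
        ext k
        rw [SimpleGraph.mem_neighborFinset, Finset.mem_singleton]
        constructor
        · intro hk; exact ℓinj (MRel.func h2 h3 n11 hk hy)
        · rintro rfl; exact hy
    rw [Finset.sum_congr rfl (fun i _ => hdeg i)] at hs
    have hcount : (∑ i : ZMod (p - 1), if i ∈ ({0, t} : Finset (ZMod (p - 1))) then 0 else 1)
        = p - 1 - 2 := by
      have e : ∀ i : ZMod (p - 1), (if i ∈ ({0, t} : Finset (ZMod (p - 1))) then 0 else 1)
        = if i ∈ ({0, t} : Finset (ZMod (p - 1)))ᶜ then 1 else 0 := by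
        intro i; simp only [Finset.mem_compl]; split_ifs <;> simp_all
      rw [Finset.sum_congr rfl (fun i _ => e i), Finset.sum_ite_mem, Finset.univ_inter,
        Finset.sum_const, Finset.card_compl, Finset.card_pair h0t, ZMod.card]
      simp
    rw [hcount] at hs
    omega
  · intro e he
    induction e using Sym2.ind with
    | _ u v =>
      rw [mem0] at he
      rw [Sym2.mk_isDiag_iff]
      rintro rfl
      exact ne1 _ _ he rfl
  · intro e he h0
    obtain ⟨j, rfl⟩ := Sym2.mem_iff_exists.1 h0
    rw [mem0, ℓ0] at he
    rcases he with ⟨h, hb, hc, hd⟩ | ⟨h, hb⟩ | ⟨h, hb⟩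
    · apply ℓne j; linear_combination h
    · apply n11; linear_combination h
    · apply h2; linear_combination h
  · intro e he e' he' hne a ha ha'
    obtain ⟨j, rfl⟩ := Sym2.mem_iff_exists.1 ha
    obtain ⟨j', rfl⟩ := Sym2.mem_iff_exists.1 ha'
    rw [mem0] at he he'
    exact hne (by rw [ℓinj (MRel.func h2 h3 n11 he he')])
  · intro a b hab
    have hAB : ℓ a ≠ ℓ b := fun h => hab (ℓinj h)
    have cA : ∀ x y, MRel (ℓ a) x y → x ≠ y := fun x y h => h.ne' h2 h3 (ℓne a)
    have cB : ∀ x y, MRel (ℓ b) x y → x ≠ y := fun x y h => h.ne' h2 h3 (ℓne b)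
    have tree := TG_tree h2 h3 (ℓne a) (ℓne b) hAB cA cB
    let f : SimpleGraph.fromEdgeSet (shiftSet a C0B ∪ shiftSet b C0B) →g TG (ℓ a) (ℓ b) cA cB :=
      { toFun := ℓ
        map_rel' := by
          intro i j h
          rw [SimpleGraph.fromEdgeSet_adj, Set.mem_union, memS, memS] at h
          exact h.1 }
    refine ⟨?_, ?_, ?_⟩
    · rw [Set.eq_empty_iff_forall_notMem]
      rintro e ⟨h, h'⟩
      induction e using Sym2.ind with
      | _ u v =>
        rw [memS] at h h'
        exact MRel.disj h2 h3 (ℓne a) (ℓne b) hAB h h'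
    · exact tree.isAcyclic.comap f ℓinj
    · rintro ⟨w⟩
      have adj0 : ∀ A : ZMod p, A ≠ 0 → MRel A 0 A := fun A hA =>
        Or.inl ⟨by ring, hA.symm, (mul_ne_zero h2 hA).symm, (neg_ne_zero.2 hA).symm⟩
      have a1 : (TG (ℓ a) (ℓ b) cA cB).Adj (ℓ a) 0 := Or.inl (adj0 _ (ℓne a)).symm'
      have a2 : (TG (ℓ a) (ℓ b) cA cB).Adj 0 (ℓ b) := Or.inr (adj0 _ (ℓne b))
      let q : (TG (ℓ a) (ℓ b) cA cB).Walk (ℓ a) (ℓ b) := .cons a1 (.cons a2 .nil)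
      have hq : q.IsPath := by
        simp [q, SimpleGraph.Walk.cons_isPath_iff, ℓne, hAB, (ℓne b).symm]
      let w' := w.toPath
      have hw : (w'.1.map f).IsPath := SimpleGraph.Walk.map_isPath_of_injective ℓinj w'.2
      have heq := tree.isAcyclic.path_unique ⟨_, hw⟩ ⟨q, hq⟩
      have heq' : w'.1.map f = q := congrArg Subtype.val heq
      have h0 : (0 : ZMod p) ∈ (w'.1.map f).support := by rw [heq']; simp [q]
      rw [SimpleGraph.Walk.support_map, List.mem_map] at h0
      obtain ⟨i, _, hi⟩ := h0
      exact ℓne i hi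
end

section
/- In Z_8 = ℤ/8ℤ, let S₀ = {{1,2},{3,5},{4,6}} and S₁ = {{0,3},{2,7},{4,5}}. Then (S₀,S₁) is an even 2-starter in Z_8, and the induced column family C_i = {{x+2⌊ī/2⌋, y+2⌊ī/2⌋} : {x,y} ∈ S_{ī mod 2}} for i ∈ Z_8 (where ī ∈ {0,…,7} is the canonical representative of i) satisfies the quasi-C-code condition: for all m ≠ k in Z_8, C_m ∩ C_k = ∅, the simple graph on vertex set Z_8 with edge set C_m ∪ C_k contains no cycle, and m and k lie in different connected components of that graph. (Hence a quasi-C-code of length 8 exists, although no C-code of length 8 exists.) -/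
/-- Edges of column `i` as a list of ordered pairs. -/
def colL (i : ZMod (2*4)) : List (ZMod (2*4) × ZMod (2*4)) :=
  (if i.val % 2 = 0 then [(1, 2), (3, 5), (4, 6)] else [(0, 3), (2, 7), (4, 5)]).map
    fun p => (p.1 + ((2 * (i.val / 2) : ℕ) : ZMod (2*4)), p.2 + ((2 * (i.val / 2) : ℕ) : ZMod (2*4)))

/-- One closure step on bitmasks. -/
def stepM (L : List (ZMod (2*4) × ZMod (2*4))) (m : ℕ) : ℕ :=
  L.foldl (fun m p => if m.testBit p.1.val || m.testBit p.2.val then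
    m ||| 2 ^ p.1.val ||| 2 ^ p.2.val else m) m

/-- Component of `a` as a bitmask. -/
def compM (L : List (ZMod (2*4) × ZMod (2*4))) (a : ZMod (2*4)) : ℕ :=
  (stepM L)^[6] (2 ^ a.val)

/-- Separation certificate check. -/
def sepM (L : List (ZMod (2*4) × ZMod (2*4))) (a b : ZMod (2*4)) : Bool :=
  let m := compM L a
  m.testBit a.val && !m.testBit b.val && L.all fun p => m.testBit p.1.val == m.testBit p.2.val

/-- The set of unordered pairs from a list. -/
def edgesOf (L : List (ZMod (2*4) × ZMod (2*4))) : Set (Sym2 (ZMod (2*4))) :=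
  {e | ∃ p ∈ L, e = s(p.1, p.2)}

theorem not_reach_of_sep (G : SimpleGraph (ZMod (2*4))) (L : List (ZMod (2*4) × ZMod (2*4)))
    (hG : ∀ x y, G.Adj x y → s(x, y) ∈ edgesOf L) (a b : ZMod (2*4))
    (h : sepM L a b = true) : ¬ G.Reachable a b := by
  simp only [sepM, Bool.and_eq_true, Bool.not_eq_true', List.all_eq_true, beq_iff_eq] at h
  obtain ⟨⟨ha, hb⟩, hL⟩ := h
  have key : ∀ x y, G.Adj x y → (compM L a).testBit x.val = (compM L a).testBit y.val := by
    intro x y hxy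
    obtain ⟨p, hp, he⟩ := hG x y hxy
    have := hL p hp
    rcases Sym2.eq_iff.1 he with ⟨rfl, rfl⟩ | ⟨rfl, rfl⟩
    · exact this
    · exact this.symm
  rintro ⟨w⟩
  have : ∀ x y (_ : G.Walk x y), (compM L a).testBit x.val = (compM L a).testBit y.val := by
    intro x y w
    induction w with
    | nil => rfl
    | cons h _ ih => exact (key _ _ h).trans ih
  have h2 := this a b w
  rw [ha, hb] at h2
  exact absurd h2 (by decide)

theorem acyclic_of_sep (L : List (ZMod (2*4) × ZMod (2*4)))
    (h : ∀ p ∈ L, sepM (L.filter fun q => q ≠ p) p.1 p.2 = true) :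
    (SimpleGraph.fromEdgeSet (edgesOf L)).IsAcyclic := by
  rw [SimpleGraph.isAcyclic_iff_forall_isBridge]
  intro e he
  obtain ⟨p, hp, rfl⟩ : e ∈ edgesOf L := by
    rw [SimpleGraph.edgeSet_fromEdgeSet] at he
    exact he.1
  rw [SimpleGraph.isBridge_iff]
  refine not_reach_of_sep _ _ ?_ _ _ (h p hp)
  intro x y hxy
  rw [SimpleGraph.deleteEdges_adj, SimpleGraph.fromEdgeSet_adj] at hxy
  obtain ⟨⟨⟨q, hq, e1⟩, -⟩, h2⟩ := hxy
  refine ⟨q, List.mem_filter.2 ⟨hq, ?_⟩, e1⟩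
  simp only [ne_eq, decide_eq_true_eq]
  rintro rfl
  exact h2 e1

theorem qCol_eq (i : ZMod (2*4)) :
    qCol 4 ({s((1 : ZMod (2*4)), 2), s(3, 5), s(4, 6)} : Set (Sym2 (ZMod (2*4))))
      ({s((0 : ZMod (2*4)), 3), s(2, 7), s(4, 5)} : Set (Sym2 (ZMod (2*4)))) i
      = edgesOf (colL i) := by
  ext e
  unfold qCol edgesOf colL
  split_ifs <;> simp [Set.image_insert_eq]

theorem union_eq (L M : List (ZMod (2*4) × ZMod (2*4))) :
    edgesOf L ∪ edgesOf M = edgesOf (L ++ M) := by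
  ext e
  simp only [edgesOf, Set.mem_union, Set.mem_ofPred_eq, List.mem_append, or_and_right, exists_or]

theorem check_all : ∀ a b : ZMod (2*4), a ≠ b →
    (∀ p ∈ colL a, ∀ q ∈ colL b, s(p.1, p.2) ≠ s(q.1, q.2)) ∧
    (∀ p ∈ colL a ++ colL b,
      sepM ((colL a ++ colL b).filter fun q => q ≠ p) p.1 p.2 = true) ∧
    sepM (colL a ++ colL b) a b = true := by
  decide +kernel

theorem part2 : QuasiCCodeCond 4
      ({s((1 : ZMod (2*4)), 2), s(3, 5), s(4, 6)} : Set (Sym2 (ZMod (2*4))))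
      ({s((0 : ZMod (2*4)), 3), s(2, 7), s(4, 5)} : Set (Sym2 (ZMod (2*4)))) := by
  intro a b hab
  obtain ⟨h1, h2, h3⟩ := check_all a b hab
  rw [qCol_eq, qCol_eq, union_eq]
  refine ⟨?_, acyclic_of_sep _ h2, not_reach_of_sep _ _ ?_ _ _ h3⟩
  · ext e
    simp only [Set.mem_inter_iff, Set.mem_empty_iff_false, iff_false]
    rintro ⟨⟨p, hp, rfl⟩, q, hq, e2⟩
    exact h1 p hp q hq e2
  · intro x y hxy
    exact ((SimpleGraph.fromEdgeSet_adj _).1 hxy).1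

theorem diffCount_eq (d : ℕ) (F : Finset (Sym2 (ZMod (2*4)))) :
    diffCount (2*4) d (F : Set (Sym2 (ZMod (2*4)))) =
      (F.filter fun e => ∃ x y : ZMod (2*4), e = s(x, y) ∧
        (y - x = (d : ZMod (2*4)) ∨ x - y = (d : ZMod (2*4)))).card := by
  unfold diffCount
  rw [← Set.ncard_coe_finset]
  congr 1
  ext e
  simp

theorem part1_aux (F0 F1 : Finset (Sym2 (ZMod (2*4))))
    (h : F0.card = 3 ∧ F1.card = 3 ∧ (∀ e ∈ F0, ¬ e.IsDiag) ∧ (∀ e ∈ F1, ¬ e.IsDiag) ∧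
      (∀ e ∈ F0, (0 : ZMod (2*4)) ∉ e) ∧ (∀ e ∈ F1, (1 : ZMod (2*4)) ∉ e))
    (hd : ∀ d ∈ Finset.Icc (1 : ℕ) 3,
      (F0.filter fun e => ∃ x y : ZMod (2*4), e = s(x, y) ∧
        (y - x = (d : ZMod (2*4)) ∨ x - y = (d : ZMod (2*4)))).card +
      (F1.filter fun e => ∃ x y : ZMod (2*4), e = s(x, y) ∧
        (y - x = (d : ZMod (2*4)) ∨ x - y = (d : ZMod (2*4)))).card = 2) :
    IsEven2Starter 4 (F0 : Set (Sym2 (ZMod (2*4)))) (F1 : Set (Sym2 (ZMod (2*4)))) := by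
  obtain ⟨a, b, c, d, e, f⟩ := h
  refine ⟨?_, ?_, c, d, e, f, ?_⟩
  · rw [Set.ncard_coe_finset, a]
  · rw [Set.ncard_coe_finset, b]
  · intro k hk hk'
    rw [diffCount_eq, diffCount_eq]
    exact hd k (Finset.mem_Icc.2 ⟨hk, hk'⟩)

theorem part1 : IsEven2Starter 4
      ({s((1 : ZMod (2*4)), 2), s(3, 5), s(4, 6)} : Set (Sym2 (ZMod (2*4))))
      ({s((0 : ZMod (2*4)), 3), s(2, 7), s(4, 5)} : Set (Sym2 (ZMod (2*4)))) := by
  have := part1_aux {s(1, 2), s(3, 5), s(4, 6)} {s(0, 3), s(2, 7), s(4, 5)}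
    (by decide +kernel) (by decide +kernel)
  simpa only [Finset.coe_insert, Finset.coe_singleton] using this

theorem stmt14 :
    IsEven2Starter 4
      ({s((1 : ZMod (2*4)), 2), s(3, 5), s(4, 6)} : Set (Sym2 (ZMod (2*4))))
      ({s((0 : ZMod (2*4)), 3), s(2, 7), s(4, 5)} : Set (Sym2 (ZMod (2*4)))) ∧
    QuasiCCodeCond 4
      ({s((1 : ZMod (2*4)), 2), s(3, 5), s(4, 6)} : Set (Sym2 (ZMod (2*4))))
      ({s((0 : ZMod (2*4)), 3), s(2, 7), s(4, 5)} : Set (Sym2 (ZMod (2*4)))) := by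
  exact ⟨part1, part2⟩
end

section
/- Let n ≥ 2 and let (S₀,S₁) be an even 2-starter in Z_{2n} such that for each i ∈ {0,1} the pairs of S_i are pairwise disjoint; let r_i be the unique element of Z_{2n} \ {i} occurring in no pair of S_i, and assume the canonical representatives r̄₀, r̄₁ ∈ {0,…,2n−1} have opposite parity. Define the twin (S′₀,S′₁) by S′_{r̄_i mod 2} = {{x−2⌊r̄_i/2⌋, y−2⌊r̄_i/2⌋} : {x,y} ∈ S_i} for i = 0,1. If the column family induced by (S₀,S₁) satisfies the quasi-C-code condition, then the column family induced by (S′₀,S′₁) also satisfies the quasi-C-code condition. -/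
/-- `M` is a matching covering exactly the complement of `{p, q}`. -/
def NearMatch {V : Type} (M : Set (Sym2 V)) (p q : V) : Prop :=
  ∃ f : V → V, (∀ x, f (f x) = x) ∧ (∀ x, f x = x ↔ x = p ∨ x = q) ∧
    ∀ x, f x ≠ x → s(x, f x) ∈ M

lemma core_aux {V : Type} [Fintype V] {M N : Set (Sym2 V)} {p q p' q' : V}
    (hM : NearMatch M p q) (hN : NearMatch N p' q') (G : SimpleGraph V)
    (hG : G = SimpleGraph.fromEdgeSet (M ∪ N))
    (h1 : ¬ G.Reachable p p') (h2 : ¬ G.Reachable p q) (h3 : ¬ G.Reachable p q') : False := by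
  classical
  obtain ⟨f, ff, fx, fM⟩ := hM
  obtain ⟨g, gg, gx, gN⟩ := hN
  have hf : ∀ x, G.Reachable p x → G.Reachable p (f x) := by
    intro x hx
    by_cases h : f x = x
    · rwa [h]
    · refine hx.trans (SimpleGraph.Adj.reachable ?_)
      rw [hG, SimpleGraph.fromEdgeSet_adj]
      exact ⟨Or.inl (fM x h), Ne.symm h⟩
  have hg : ∀ x, G.Reachable p x → G.Reachable p (g x) := by
    intro x hx
    by_cases h : g x = x
    · rwa [h]
    · refine hx.trans (SimpleGraph.Adj.reachable ?_)
      rw [hG, SimpleGraph.fromEdgeSet_adj]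
      exact ⟨Or.inr (gN x h), Ne.symm h⟩
  let B : Finset V := Finset.univ.filter (fun x => G.Reachable p x)
  have hB : ∀ x, x ∈ B ↔ G.Reachable p x := by intro x; simp [B]
  have e1 : ∑ x ∈ B, (1 : ZMod 2) = 0 := by
    refine Finset.sum_involution (fun x _ => g x) ?_ ?_ ?_ ?_
    · intros; decide
    · intro x hx _ h
      rw [hB] at hx
      rcases (gx x).1 h with rfl | rfl
      · exact h1 hx
      · exact h3 hx
    · intro x hx
      rw [hB] at *
      exact hg x hx
    · intro x hx; exact gg x
  have e2 : ∑ x ∈ B.erase p, (1 : ZMod 2) = 0 := by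
    refine Finset.sum_involution (fun x _ => f x) ?_ ?_ ?_ ?_
    · intros; decide
    · intro x hx _ h
      rw [Finset.mem_erase, hB] at hx
      rcases (fx x).1 h with rfl | rfl
      · exact hx.1 rfl
      · exact h2 hx.2
    · intro x hx
      rw [Finset.mem_erase, hB] at *
      refine ⟨fun h => hx.1 ?_, hf x hx.2⟩
      have := ff x
      rw [h, (fx p).2 (Or.inl rfl)] at this
      exact this.symm
    · intro x hx; exact ff x
  have hp : p ∈ B := (hB p).2 (SimpleGraph.Reachable.refl p)
  rw [← Finset.add_sum_erase B _ hp, e2] at e1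
  exact absurd e1 (by decide)

lemma core {V : Type} [Fintype V] {M N : Set (Sym2 V)} {p q p' q' : V}
    (hM : NearMatch M p q) (hN : NearMatch N p' q')
    (h1 : ¬ (SimpleGraph.fromEdgeSet (M ∪ N)).Reachable p p') :
    ¬ (SimpleGraph.fromEdgeSet (M ∪ N)).Reachable q q' := by
  intro h
  by_cases h2 : (SimpleGraph.fromEdgeSet (M ∪ N)).Reachable p q
  · refine core_aux hN hM _ (by rw [Set.union_comm]) (fun h' => h1 h'.symm) ?_ ?_
    · exact fun h' => h1 ((h2.trans h).trans h'.symm)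
    · exact fun h' => h1 (h2.trans h'.symm)
  · exact core_aux hM hN _ rfl h1 h2 (fun h' => h2 (h'.trans h.symm))

lemma NearMatch.shift {m : ℕ} {M : Set (Sym2 (ZMod m))} {p q : ZMod m}
    (h : NearMatch M p q) (c : ZMod m) :
    NearMatch ((Sym2.map (· + c)) '' M) (p + c) (q + c) := by
  obtain ⟨f, ff, fx, fM⟩ := h
  refine ⟨fun x => f (x - c) + c, ?_, ?_, ?_⟩
  · intro x; simp [ff]
  · intro x
    have := fx (x - c)
    rw [← eq_sub_iff_add_eq, this, sub_eq_iff_eq_add, sub_eq_iff_eq_add]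
  · intro x hx
    refine ⟨s(x - c, f (x - c)), fM _ (fun h => hx ?_), ?_⟩
    · simp [h]
    · simp

lemma nearMatch_of {V : Type} [Fintype V] (M : Set (Sym2 V)) (n : ℕ) (hn : 2 ≤ n)
    (hV : Fintype.card V = 2 * n)
    (hc : M.ncard = n - 1) (hnd : ∀ e ∈ M, ¬ e.IsDiag)
    (hd : ∀ e ∈ M, ∀ e' ∈ M, e ≠ e' → ∀ a, a ∈ e → a ∉ e')
    (p q : V) (hpq : q ≠ p) (hp : ∀ e ∈ M, p ∉ e) (hq : ∀ e ∈ M, q ∉ e) :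
    NearMatch M p q := by
  classical
  let U : Finset V := M.toFinset.biUnion Sym2.toFinset
  have hU : ∀ x, x ∈ U ↔ ∃ e ∈ M, x ∈ e := by intro x; simp [U]
  have hUc : U.card = 2 * (n - 1) := by
    rw [Finset.card_biUnion]
    · rw [Finset.sum_congr rfl (g := fun _ => 2), Finset.sum_const, ← hc,
        Set.ncard_eq_toFinset_card']
      · simp [mul_comm]
      · intro e he
        exact Sym2.card_toFinset_of_not_isDiag e (hnd e (by simpa using he))
    · intro e he e' he' hne
      refine Finset.disjoint_left.2 ?_
      intro a ha ha'
      exact hd e (by simpa using he) e' (by simpa using he') hne a (by simpa using ha)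
        (by simpa using ha')
  have hcompl : ({p, q} : Finset V) = Uᶜ := by
    apply Finset.eq_of_subset_of_card_le
    · intro x hx
      rw [Finset.mem_compl, hU]
      rintro ⟨e, he, hxe⟩
      simp only [Finset.mem_insert, Finset.mem_singleton] at hx
      rcases hx with rfl | rfl
      · exact hp e he hxe
      · exact hq e he hxe
    · rw [Finset.card_compl, hUc, hV, Finset.card_pair hpq.symm]; omega
  have hcov : ∀ x, (∃ y, s(x, y) ∈ M) ↔ ¬ (x = p ∨ x = q) := by
    intro x
    have h1 : x ∈ ({p, q} : Finset V) ↔ x ∈ Uᶜ := by rw [hcompl]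
    rw [Finset.mem_compl, hU] at h1
    simp only [Finset.mem_insert, Finset.mem_singleton] at h1
    rw [h1, not_not]
    constructor
    · rintro ⟨y, hy⟩; exact ⟨_, hy, by simp⟩
    · rintro ⟨e, he, hx⟩
      obtain ⟨y, rfl⟩ := hx
      exact ⟨y, he⟩
  have huniq : ∀ x y z, s(x, y) ∈ M → s(x, z) ∈ M → y = z := by
    intro x y z h1 h2
    by_contra hne
    exact hd _ h1 _ h2 (fun h => hne (Sym2.congr_right.1 h)) x (by simp) (by simp)
  have hne : ∀ x y, s(x, y) ∈ M → y ≠ x := by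
    rintro x y h rfl
    exact hnd _ h (by simp)
  have hex : ∀ x, ∃ y, (s(x, y) ∈ M ∧ ¬ (x = p ∨ x = q)) ∨ (y = x ∧ (x = p ∨ x = q)) := by
    intro x
    by_cases h : x = p ∨ x = q
    · exact ⟨x, Or.inr ⟨rfl, h⟩⟩
    · obtain ⟨y, hy⟩ := (hcov x).2 h
      exact ⟨y, Or.inl ⟨hy, h⟩⟩
  choose f hf using hex
  refine ⟨f, ?_, ?_, ?_⟩
  · intro x
    rcases hf x with ⟨h, h'⟩ | ⟨h, h'⟩
    · rcases hf (f x) with ⟨k, k'⟩ | ⟨k, k'⟩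
      · exact huniq (f x) _ _ k (by rwa [Sym2.eq_swap])
      · exact absurd k' ((hcov (f x)).1 ⟨x, by rwa [Sym2.eq_swap]⟩)
    · rw [h, h]
  · intro x
    rcases hf x with ⟨h, h'⟩ | ⟨h, h'⟩
    · exact ⟨fun k => absurd k (hne _ _ h), fun k => absurd k h'⟩
    · exact ⟨fun _ => h', fun _ => h⟩
  · intro x hx
    rcases hf x with ⟨h, h'⟩ | ⟨h, h'⟩
    · exact h
    · exact absurd h hx

lemma val_decomp (n : ℕ) (hn : 2 ≤ n) (i : ZMod (2*n)) :
    i = ((2 * (i.val / 2) : ℕ) : ZMod (2*n)) + ((i.val % 2 : ℕ) : ZMod (2*n)) := by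
  haveI : NeZero (2*n) := ⟨by omega⟩
  rw [← Nat.cast_add, Nat.div_add_mod, ZMod.natCast_zmod_val]

lemma val_parity (n : ℕ) (hn : 2 ≤ n) (u v j : ℕ) (hj : j < 2) :
    ((((j : ℕ) : ZMod (2*n)) + ((2 * u : ℕ) : ZMod (2*n)) - ((2 * v : ℕ) : ZMod (2*n)))).val % 2
      = j := by
  haveI : NeZero (2*n) := ⟨by omega⟩
  have h2 : 2 ∣ 2 * n := ⟨n, rfl⟩
  set k := (((j : ℕ) : ZMod (2*n)) + ((2 * u : ℕ) : ZMod (2*n)) - ((2 * v : ℕ) : ZMod (2*n)))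
    with hk
  have e : ((k.val : ℕ) : ZMod 2) = ((j : ℕ) : ZMod 2) := by
    have h := congrArg (ZMod.castHom h2 (ZMod 2)) hk
    rw [← ZMod.natCast_zmod_val k] at h
    simp only [map_add, map_sub, map_natCast] at h
    rw [h, Nat.cast_mul, Nat.cast_mul]
    have : ((2 : ℕ) : ZMod 2) = 0 := by decide
    rw [this]; ring
  rw [ZMod.natCast_eq_natCast_iff'] at e
  omega

lemma twin_aux (n : ℕ) (hn : 2 ≤ n) (S T0 T1 : Set (Sym2 (ZMod (2*n)))) (j : ℕ) (hj : j < 2)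
    (S0 S1 : Set (Sym2 (ZMod (2*n)))) (hS : (if j = 0 then S0 else S1) = S)
    (r : ZMod (2*n)) (hS' : NearMatch S (j : ZMod (2*n)) r)
    (hT : (if r.val % 2 = 0 then T0 else T1) =
      (Sym2.map (· - ((2 * (r.val / 2) : ℕ) : ZMod (2*n)))) '' S)
    (a : ZMod (2*n)) (ha : a.val % 2 = r.val % 2) :
    ∃ k : ZMod (2*n), qCol n T0 T1 a = qCol n S0 S1 k ∧ NearMatch (qCol n S0 S1 k) k a ∧
      k.val % 2 = j ∧ a = r + (k - (j : ZMod (2*n))) := by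
  have hk := val_parity n hn (a.val / 2) (r.val / 2) j hj
  have da := val_decomp n hn a
  have dr := val_decomp n hn r
  set A := ((2 * (a.val / 2) : ℕ) : ZMod (2*n))
  set R := ((2 * (r.val / 2) : ℕ) : ZMod (2*n))
  set k := ((j : ℕ) : ZMod (2*n)) + A - R with hkd
  have dk := val_decomp n hn k
  rw [hk] at dk
  have dk' : ((2 * (k.val / 2) : ℕ) : ZMod (2*n)) = A - R := by
    have := hkd.symm.trans dk
    linear_combination -this
  have hak : a = r + (A - R) := by
    rw [ha] at da
    linear_combination da - dr
  have hcol : qCol n S0 S1 k = (Sym2.map (· + (A - R))) '' S := by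
    unfold qCol
    rw [hk, dk', hS]
  refine ⟨k, ?_, ?_, hk, ?_⟩
  · rw [hcol]
    unfold qCol
    rw [ha, hT, Set.image_image]
    refine Set.image_congr ?_
    intro e _
    rw [Sym2.map_map]
    congr 1
    funext x
    simp only [Function.comp]
    change x - R + A = _
    ring
  · rw [hcol]
    have := hS'.shift (A - R)
    rwa [← hak, show (j : ZMod (2*n)) + (A - R) = k by rw [hkd]; ring] at this
  · rw [hkd]; linear_combination hak

/-- Let `(S0, S1)` be an even 2-starter in `ZMod (2n)` whose pairs
are pairwise disjoint within each `Sᵢ`, with missing elements `r0 ∈ ZMod (2n) \ {0}`,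
`r1 ∈ ZMod (2n) \ {1}` of opposite parity. If the column family induced by `(S0, S1)`
satisfies the quasi-C-code condition, then so does the one induced by the twin
`(S0', S1')` given by `S'_{r̄ᵢ mod 2} = Sᵢ - 2⌊r̄ᵢ/2⌋`. -/
theorem stmt15 (n : ℕ) (hn : 2 ≤ n)
    (S0 S1 : Set (Sym2 (ZMod (2*n))))
    (hstarter : IsEven2Starter n S0 S1)
    (hd0 : ∀ e ∈ S0, ∀ e' ∈ S0, e ≠ e' → ∀ a, a ∈ e → a ∉ e')
    (hd1 : ∀ e ∈ S1, ∀ e' ∈ S1, e ≠ e' → ∀ a, a ∈ e → a ∉ e')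
    (r0 r1 : ZMod (2*n))
    (hr0 : r0 ≠ 0) (hr0m : ∀ e ∈ S0, r0 ∉ e)
    (hr1 : r1 ≠ 1) (hr1m : ∀ e ∈ S1, r1 ∉ e)
    (hpar : r0.val % 2 ≠ r1.val % 2)
    (S0' S1' : Set (Sym2 (ZMod (2*n))))
    (htw0 : (if r0.val % 2 = 0 then S0' else S1') =
      (Sym2.map (· - ((2 * (r0.val / 2) : ℕ) : ZMod (2*n)))) '' S0)
    (htw1 : (if r1.val % 2 = 0 then S0' else S1') =
      (Sym2.map (· - ((2 * (r1.val / 2) : ℕ) : ZMod (2*n)))) '' S1)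
    (hq : QuasiCCodeCond n S0 S1) :
    QuasiCCodeCond n S0' S1' := by
  haveI : NeZero (2*n) := ⟨by omega⟩
  obtain ⟨c0, c1, n0, n1, z0, z1, -⟩ := hstarter
  have hV : Fintype.card (ZMod (2*n)) = 2 * n := ZMod.card _
  have m0 := nearMatch_of S0 n hn hV c0 n0 hd0 0 r0 hr0 z0 hr0m
  have m1 := nearMatch_of S1 n hn hV c1 n1 hd1 1 r1 hr1 z1 hr1m
  have key : ∀ a : ZMod (2*n), ∃ k : ZMod (2*n), qCol n S0' S1' a = qCol n S0 S1 k ∧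
      NearMatch (qCol n S0 S1 k) k a ∧
      a = (if k.val % 2 = 0 then r0 else r1) + (k - ((k.val % 2 : ℕ) : ZMod (2*n))) := by
    intro a
    by_cases ha : a.val % 2 = r0.val % 2
    · obtain ⟨k, h1, h2, h3, h4⟩ := twin_aux n hn S0 S0' S1' 0 (by omega) S0 S1 (by simp) r0
        (by simpa using m0) htw0 a ha
      exact ⟨k, h1, h2, by rw [h3]; simpa using h4⟩
    · obtain ⟨k, h1, h2, h3, h4⟩ := twin_aux n hn S1 S0' S1' 1 (by omega) S0 S1 (by simp) r1
        (by simpa using m1) htw1 a (by omega)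
      exact ⟨k, h1, h2, by rw [h3]; simpa using h4⟩
  intro a b hab
  obtain ⟨k, k1, k2, k3⟩ := key a
  obtain ⟨l, l1, l2, l3⟩ := key b
  have hkl : k ≠ l := by
    rintro rfl
    exact hab (k3.trans l3.symm)
  obtain ⟨q1, q2, q3⟩ := hq k l hkl
  rw [k1, l1]
  exact ⟨q1, q2, core k2 l2 q3⟩
end

section
/- Let p ≥ 5 be a prime and let g be a generator of (ℤ/pℤ)ˣ; for x ∈ (ℤ/pℤ)ˣ let ℓ(x) ∈ {0,…,p−2} be the unique integer with g^{ℓ(x)} = x. In Z_{2(p−1)} = ℤ/2(p−1)ℤ define S₀ = {{2ℓ(x), 2ℓ(x−1)+1} : x ∈ (ℤ/pℤ)ˣ, x ≠ 1} and S₁ = {{2ℓ(x)+1, 2ℓ(y)+1} : x,y ∈ (ℤ/pℤ)ˣ \ {1, 2⁻¹}, x+y = 1} ∪ {{2ℓ(x), 2ℓ(y)} : x,y ∈ (ℤ/pℤ)ˣ \ {1, 2⁻¹}, x+y = 1} ∪ {{2r̄, 2r̄+1}}, where r̄ ∈ {1,…,p−2} is the unique nonzero residue modulo p−1 not occurring in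 the set C₀^A = {{ℓ(x), ℓ(y)} : x,y ∈ (ℤ/pℤ)ˣ \ {1, 2⁻¹}, x+y = 1} of residues modulo p−1. Then (S₀,S₁) is an even 2-starter in Z_{2(p−1)}. -/
namespace S16

lemma cast_ex {m : ℕ} {a b : ℕ} (h : ((a : ℕ) : ZMod m) = ((b : ℕ) : ZMod m)) :
    ∃ q : ℤ, (a : ℤ) - b = m * q := by
  have h1 : (((a : ℤ) - (b : ℤ) : ℤ) : ZMod m) = 0 := by
    push_cast; rw [h]; ring
  exact (ZMod.intCast_zmod_eq_zero_iff_dvd _ m).1 h1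

/-- parity and divisibility of congruent numbers -/
lemma cast_par {n : ℕ} {a b : ℕ} (h : ((a : ℕ) : ZMod (2*n)) = ((b : ℕ) : ZMod (2*n))) :
    a % 2 = b % 2 := by
  obtain ⟨q, hq⟩ := cast_ex h
  push_cast at hq
  have : (a : ℤ) - b = 2 * (n * q) := by rw [hq]; ring
  omega

lemma cast_two {n : ℕ} {a b : ℕ} (h : ((2 * a : ℕ) : ZMod (2*n)) = ((2 * b : ℕ) : ZMod (2*n))) :
    a ≡ b [MOD n] := by
  obtain ⟨q, hq⟩ := cast_ex h
  push_cast at hq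
  have h2 : (a : ℤ) - b = n * q := by
    have : (2:ℤ) * ((a : ℤ) - b) = 2 * (n * q) := by linarith
    linarith
  have := (Int.modEq_iff_dvd.2 ⟨q, h2⟩)
  exact (Int.natCast_modEq_iff.1 this).symm

lemma cast_two' {n : ℕ} {a b : ℕ} (h : a ≡ b [MOD n]) :
    ((2 * a : ℕ) : ZMod (2*n)) = ((2 * b : ℕ) : ZMod (2*n)) := by
  rw [ZMod.natCast_eq_natCast_iff]
  exact Nat.ModEq.mul_left' 2 h

lemma small {m a b : ℕ} (ha : a < m) (hb : b < m)
    (h : ((a : ℕ) : ZMod m) = ((b : ℕ) : ZMod m)) : a = b := by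
  rw [ZMod.natCast_eq_natCast_iff] at h
  exact Nat.ModEq.eq_of_lt_of_lt h ha hb

/-- a pair with difference `δ` -/
def pr (m : ℕ) (u δ : ℕ) : Sym2 (ZMod m) := s(((u + δ : ℕ) : ZMod m), (u : ZMod m))

lemma pr_diff {m u δ d : ℕ} (h1 : 0 < δ) (h2 : δ < m) (hd1 : 0 < d) (hd : d < m) :
    (∃ x y : ZMod m, pr m u δ = s(x, y) ∧
    (y - x = (d : ZMod m) ∨ x - y = (d : ZMod m))) ↔ (δ = d ∨ δ + d = m) := by
  have key : ((δ : ZMod m) = d ∨ -(δ : ZMod m) = d) ↔ (δ = d ∨ δ + d = m) := by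
    constructor
    · rintro (h | h)
      · left; exact small h2 hd h
      · right
        have h3 : ((δ + d : ℕ) : ZMod m) = 0 := by push_cast; rw [← h]; ring
        rw [ZMod.natCast_eq_zero_iff] at h3
        obtain ⟨q, hq⟩ := h3
        have : q = 1 := by
          rcases q with _ | _ | q
          · omega
          · rfl
          · have : m * (q + 1 + 1) = m * q + 2 * m := by ring
            have := Nat.zero_le (m * q)
            omega
        subst this; omega
    · rintro (h | h)
      · left; rw [h]
      · right
        have : ((δ + d : ℕ) : ZMod m) = 0 := by rw [h]; simp
        push_cast at this
        linear_combination -this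
  rw [← key]
  constructor
  · rintro ⟨x, y, he, hxy⟩
    unfold pr at he
    rw [Sym2.eq_iff] at he
    push_cast at he
    rcases he with ⟨rfl, rfl⟩ | ⟨rfl, rfl⟩ <;> ring_nf at hxy <;> tauto
  · rintro h
    refine ⟨_, _, rfl, ?_⟩
    push_cast
    ring_nf
    tauto

lemma diffCount_image {m N d : ℕ} (u δ : ℕ → ℕ) (hδ : ∀ k ∈ Finset.Icc 1 N, 0 < δ k ∧ δ k < m)
    (hinj : Set.InjOn (fun k => pr m (u k) (δ k)) (Finset.Icc 1 N : Finset ℕ))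
    (hd1 : 0 < d) (hd : d < m) :
    diffCount m d ((fun k => pr m (u k) (δ k)) '' (Finset.Icc 1 N : Finset ℕ))
      = ((Finset.Icc 1 N).filter (fun k => δ k = d ∨ δ k + d = m)).card := by
  unfold diffCount
  have : {e ∈ ((fun k => pr m (u k) (δ k)) '' (Finset.Icc 1 N : Finset ℕ)) | ∃ x y : ZMod m, e = s(x, y) ∧
    (y - x = (d : ZMod m) ∨ x - y = (d : ZMod m))} = (fun k => pr m (u k) (δ k)) ''
      (((Finset.Icc 1 N).filter (fun k => δ k = d ∨ δ k + d = m) : Finset ℕ) : Set ℕ) := by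
    ext e
    constructor
    · rintro ⟨⟨k, hk, rfl⟩, h⟩
      refine ⟨k, ?_, rfl⟩
      have hk' := hδ k hk
      have := (pr_diff hk'.1 hk'.2 hd1 hd).1 h
      simp only [Finset.coe_filter, Set.mem_ofPred_eq]
      exact ⟨hk, this⟩
    · rintro ⟨k, hk, rfl⟩
      simp only [Finset.coe_filter, Set.mem_ofPred_eq] at hk
      have hk' := hδ k hk.1
      exact ⟨⟨k, hk.1, rfl⟩, (pr_diff hk'.1 hk'.2 hd1 hd).2 hk.2⟩
  rw [this, Set.ncard_image_of_injOn, Set.ncard_coe_finset]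
  exact hinj.mono (by intro k hk; simp at hk ⊢; exact hk.1)

lemma pr_nd {m u δ : ℕ} (h1 : 0 < δ) (h2 : δ < m) : ¬ (pr m u δ).IsDiag := by
  unfold pr
  rw [Sym2.mk_isDiag_iff]
  intro h
  push_cast at h
  have : ((δ : ℕ) : ZMod m) = ((0 : ℕ) : ZMod m) := by push_cast; linear_combination h
  have := small h2 (by omega) this
  omega

lemma pr_eq {m u δ u' δ' : ℕ} (h : pr m u δ = pr m u' δ') (h1 : 0 < δ) (h2 : δ < m)
    (h1' : 0 < δ') (h2' : δ' < m) : δ = δ' ∨ δ + δ' = m := by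
  rw [← pr_diff (u := u) h1 h2 h1' h2']
  refine ⟨_, _, h, ?_⟩
  right; push_cast; ring

lemma pr_par {n u δ u' δ' : ℕ} (h : pr (2*n) u δ = pr (2*n) u' δ') :
    ((u + δ) % 2 = (u' + δ') % 2 ∧ u % 2 = u' % 2) ∨
    ((u + δ) % 2 = u' % 2 ∧ u % 2 = (u' + δ') % 2) := by
  unfold pr at h
  rw [Sym2.eq_iff] at h
  rcases h with ⟨h, h'⟩ | ⟨h, h'⟩
  · exact .inl ⟨cast_par h, cast_par h'⟩
  · exact .inr ⟨cast_par h, cast_par h'⟩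

lemma core (n : ℕ) (hn : 4 ≤ n) (M : ℕ) (hM : n = 2 * M) (b c : ℕ → ℕ) (r : ℕ)
    (hb : ∀ k ∈ Finset.Icc 1 (n-1), ¬ n ∣ b k + k)
    (hc : ∀ k ∈ Finset.Icc 1 (M-1), ¬ n ∣ c k + k ∧ ¬ n ∣ c k) (hr : ¬ n ∣ r)
    (S0 S1 : Set (Sym2 (ZMod (2*n))))
    (hS0 : ∀ e, e ∈ S0 ↔ ∃ k ∈ Finset.Icc 1 (n-1),
      e = s(((2 * (b k + k) : ℕ) : ZMod (2*n)), ((2 * b k + 1 : ℕ) : ZMod (2*n))))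
    (hS1 : ∀ e, e ∈ S1 ↔ (∃ k ∈ Finset.Icc 1 (M-1),
      e = s(((2 * (c k + k) + 1: ℕ) : ZMod (2*n)), ((2 * c k + 1 : ℕ) : ZMod (2*n))) ∨
      e = s(((2 * (c k + k) : ℕ) : ZMod (2*n)), ((2 * c k : ℕ) : ZMod (2*n)))) ∨
      e = s(((2 * r : ℕ) : ZMod (2*n)), ((2 * r + 1 : ℕ) : ZMod (2*n)))) :
    IsEven2Starter n S0 S1 := by
  obtain ⟨u0, hu0⟩ : ∃ u0 : ℕ → ℕ, u0 = fun k => 2 * b k + 1 := ⟨_, rfl⟩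
  obtain ⟨δ0, hδ0⟩ : ∃ δ0 : ℕ → ℕ, δ0 = fun k => 2 * k - 1 := ⟨_, rfl⟩
  obtain ⟨u1, hu1⟩ : ∃ u1 : ℕ → ℕ, u1 = fun k => if k < M then 2 * c k else if k = M then 2 * r else
    2 * c (k - M) + 1 := ⟨_, rfl⟩
  obtain ⟨δ1, hδ1⟩ : ∃ δ1 : ℕ → ℕ, δ1 = fun k => if k < M then 2 * k else if k = M then 1 else
    2 * (k - M) := ⟨_, rfl⟩
  have e0 : S0 = (fun k => pr (2*n) (u0 k) (δ0 k)) '' (Finset.Icc 1 (n-1) : Finset ℕ) := by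
    ext e
    rw [hS0, Set.mem_image]
    refine exists_congr fun k => and_congr_right fun hk => ?_
    have : u0 k + δ0 k = 2 * (b k + k) := by
      simp only [hu0, hδ0]; simp at hk; omega
    simp only [pr, this]
    simp only [hu0]
    exact eq_comm
  have e1 : S1 = (fun k => pr (2*n) (u1 k) (δ1 k)) '' (Finset.Icc 1 (n-1) : Finset ℕ) := by
    ext e
    rw [hS1, Set.mem_image]
    constructor
    · rintro (⟨k, hk, h | h⟩ | h)
      · have hk' := Finset.mem_Icc.1 hk
        refine ⟨k + M, by simp; omega, ?_⟩
        have h1 : u1 (k + M) = 2 * c k + 1 := by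
          simp [hu1, show ¬ (k = 0) by omega]
        have h2 : u1 (k + M) + δ1 (k+M) = 2 * (c k + k) + 1 := by
          rw [h1]; simp [hδ1, show ¬ (k = 0) by omega]; omega
        simp only [pr, h1, h2, h]
        rw [← h1, h2]
      · have hk' := Finset.mem_Icc.1 hk
        refine ⟨k, by simp; omega, ?_⟩
        have h1 : u1 k = 2 * c k := by
          simp [hu1, show k < M by omega]
        have h2 : u1 k + δ1 k = 2 * (c k + k) := by
          rw [h1]; simp [hδ1, show k < M by omega]; omega
        simp only [pr, h2, h]
        rw [h1]
      · refine ⟨M, by simp; omega, ?_⟩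
        have h1 : u1 M = 2 * r := by simp [hu1]
        have h2 : u1 M + δ1 M = 2 * r + 1 := by rw [h1]; simp [hδ1]
        simp only [pr, h2, h]
        rw [h1, Sym2.eq_swap]
    · rintro ⟨k, hk, rfl⟩
      simp at hk
      rcases lt_trichotomy k M with h | h | h
      · left
        refine ⟨k, by simp; omega, .inr ?_⟩
        have h1 : u1 k = 2 * c k := by
          simp [hu1, h]
        have h2 : u1 k + δ1 k = 2 * (c k + k) := by
          rw [h1]; simp [hδ1, h]; omega
        simp only [pr, h2]
        rw [h1]
      · right
        subst h
        have h1 : u1 k = 2 * r := by simp [hu1]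
        have h2 : u1 k + δ1 k = 2 * r + 1 := by rw [h1]; simp [hδ1]
        simp only [pr, h2]
        rw [h1, Sym2.eq_swap]
      · left
        refine ⟨k - M, by simp; omega, .inl ?_⟩
        have h1 : u1 k = 2 * c (k-M) + 1 := by
          simp [hu1, show ¬ (k < M) by omega, show ¬ (k = M) by omega]
        have h2 : u1 k + δ1 k = 2 * (c (k-M) + (k-M)) + 1 := by
          rw [h1]; simp [hδ1, show ¬ (k < M) by omega, show ¬ (k = M) by omega]; omega
        simp only [pr, h2]
        rw [h1]
  have b0 : ∀ k ∈ Finset.Icc 1 (n-1), 0 < δ0 k ∧ δ0 k < 2 * n := by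
    intro k hk; simp at hk; simp only [hδ0]; omega
  have b1 : ∀ k ∈ Finset.Icc 1 (n-1), 0 < δ1 k ∧ δ1 k < 2 * n := by
    intro k hk; simp at hk; simp only [hδ1]; split_ifs <;> omega
  have i0 : Set.InjOn (fun k => pr (2*n) (u0 k) (δ0 k)) (Finset.Icc 1 (n-1) : Finset ℕ) := by
    intro k hk k' hk' h
    have B := b0 k hk
    have B' := b0 k' hk'
    simp only [pr] at h
    rw [Sym2.eq_iff] at h
    simp at hk hk'
    rcases h with ⟨h, h'⟩ | ⟨h, h'⟩
    · push_cast at h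
      rw [h', add_right_inj] at h
      have := small B.2 B'.2 h
      simp only [hδ0] at this
      omega
    · have := cast_par h
      simp only [hu0, hδ0] at this
      omega
  have i1 : Set.InjOn (fun k => pr (2*n) (u1 k) (δ1 k)) (Finset.Icc 1 (n-1) : Finset ℕ) := by
    intro k hk k' hk' h
    have B := b1 k hk
    have B' := b1 k' hk'
    have h1 := pr_eq h B.1 B.2 B'.1 B'.2
    have h2 := pr_par h
    clear h
    simp at hk hk'
    simp only [hu1, hδ1] at h1 h2
    split_ifs at h1 h2 <;> omega
  have card : (Finset.Icc 1 (n-1)).card = n - 1 := by simp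
  refine ⟨?_, ?_, ?_, ?_, ?_, ?_, ?_⟩
  · rw [e0, Set.ncard_image_of_injOn i0, Set.ncard_coe_finset, card]
  · rw [e1, Set.ncard_image_of_injOn i1, Set.ncard_coe_finset, card]
  · rw [e0]; rintro e ⟨k, hk, rfl⟩; exact pr_nd (b0 k hk).1 (b0 k hk).2
  · rw [e1]; rintro e ⟨k, hk, rfl⟩; exact pr_nd (b1 k hk).1 (b1 k hk).2
  · intro e he
    obtain ⟨k, hk, rfl⟩ := (hS0 e).1 he
    rw [Sym2.mem_iff]
    rintro (h | h)
    · apply hb k hk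
      rw [← Nat.modEq_zero_iff_dvd]
      apply cast_two
      rw [← h]; simp
    · have := cast_par (a := 0) (by rw [← h]; simp)
      omega
  · intro e he
    have aux : ∀ a, (1 : ZMod (2*n)) = ((2 * a + 1 : ℕ) : ZMod (2*n)) → n ∣ a := by
      intro a h
      rw [← Nat.modEq_zero_iff_dvd]
      apply cast_two
      push_cast at h ⊢
      linear_combination -h
    have aux2 : ∀ a, (1 : ZMod (2*n)) ≠ ((2 * a : ℕ) : ZMod (2*n)) := by
      intro a h
      have := cast_par (a := 1) (by rw [← h]; simp)
      omega
    obtain (⟨k, hk, rfl | rfl⟩ | rfl) := (hS1 e).1 he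
    · rw [Sym2.mem_iff]
      rintro (h | h)
      · exact (hc k hk).1 (aux _ h)
      · exact (hc k hk).2 (aux _ h)
    · rw [Sym2.mem_iff]
      rintro (h | h)
      · exact aux2 _ h
      · exact aux2 _ h
    · rw [Sym2.mem_iff]
      rintro (h | h)
      · exact aux2 _ h
      · exact hr (aux _ h)
  · intro d hd1 hd
    rw [e0, e1, diffCount_image u0 δ0 b0 i0 (by omega) (by omega),
      diffCount_image u1 δ1 b1 i1 (by omega) (by omega)]
    rcases Nat.even_or_odd' d with ⟨q, hq | hq⟩
    · have f0 : (Finset.Icc 1 (n-1)).filter (fun k => δ0 k = d ∨ δ0 k + d = 2*n) = ∅ := by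
        ext k; simp [hδ0]; omega
      have f1 : (Finset.Icc 1 (n-1)).filter (fun k => δ1 k = d ∨ δ1 k + d = 2*n) = {q, q + M} := by
        ext k; simp only [hδ1, Finset.mem_filter, Finset.mem_Icc, Finset.mem_insert, Finset.mem_singleton]
        split_ifs <;> omega
      rw [f0, f1, Finset.card_pair (by omega)]; simp
    · by_cases hq0 : q = 0
      · have f0 : (Finset.Icc 1 (n-1)).filter (fun k => δ0 k = d ∨ δ0 k + d = 2*n) = {1} := by
          ext k; simp [hδ0]; omega
        have f1 : (Finset.Icc 1 (n-1)).filter (fun k => δ1 k = d ∨ δ1 k + d = 2*n) = {M} := by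
          ext k; simp only [hδ1, Finset.mem_filter, Finset.mem_Icc, Finset.mem_singleton]
          split_ifs <;> omega
        rw [f0, f1]; simp
      · have f0 : (Finset.Icc 1 (n-1)).filter (fun k => δ0 k = d ∨ δ0 k + d = 2*n) = {q+1, n - q} := by
          ext k; simp [hδ0]; omega
        have f1 : (Finset.Icc 1 (n-1)).filter (fun k => δ1 k = d ∨ δ1 k + d = 2*n) = ∅ := by
          ext k; simp only [hδ1, Finset.mem_filter, Finset.mem_Icc, Finset.notMem_empty, iff_false]
          split_ifs <;> omega
        rw [f0, f1, Finset.card_pair (by omega)]; simp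

end S16

/-- Let `p ≥ 5` be prime, `g` a generator of `(ZMod p)ˣ`, `L` the
integer discrete logarithm (`L x ∈ {0,…,p-2}`, `g ^ L x = x`), and `r ∈ {1,…,p-2}` the
residue not occurring in `C₀^A = {{L x, L y} : x,y ∉ {1,2⁻¹}, x+y=1}`. Then the pair
`(S₀, S₁)` defined in `ZMod (2(p-1))` by
`S₀ = {{2L x, 2L (x-1) + 1} : x ≠ 1}` and
`S₁ = {{2L x + 1, 2L y + 1} : x+y=1, x,y ∉ {1,2⁻¹}} ∪ {{2L x, 2L y} : …} ∪ {{2r, 2r+1}}`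
is an even 2-starter in `ZMod (2(p-1))`. -/
theorem stmt16 (p : ℕ) [Fact p.Prime] (hp : 5 ≤ p)
    (g : (ZMod p)ˣ) (hg : ∀ u : (ZMod p)ˣ, u ∈ Subgroup.zpowers g)
    (L : (ZMod p)ˣ → ℕ) (hL : ∀ x : (ZMod p)ˣ, L x ≤ p - 2 ∧ g ^ (L x) = x)
    (r : ℕ) (hr1 : 1 ≤ r) (hr2 : r ≤ p - 2)
    (hrmiss : ∀ x y : (ZMod p)ˣ,
      x ≠ 1 → y ≠ 1 → (x : ZMod p) ≠ (2 : ZMod p)⁻¹ → (y : ZMod p) ≠ (2 : ZMod p)⁻¹ →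
      (x : ZMod p) + (y : ZMod p) = 1 → r ≠ L x ∧ r ≠ L y)
    (S0 S1 : Set (Sym2 (ZMod (2*(p-1)))))
    (hS0 : S0 = {e | ∃ x y : (ZMod p)ˣ, x ≠ 1 ∧ (x : ZMod p) = (y : ZMod p) + 1 ∧
      e = s(((2 * L x : ℕ) : ZMod (2*(p-1))), ((2 * L y + 1 : ℕ) : ZMod (2*(p-1))))})
    (hS1 : S1 = {e | ∃ x y : (ZMod p)ˣ,
        (x ≠ 1 ∧ y ≠ 1 ∧ (x : ZMod p) ≠ (2 : ZMod p)⁻¹ ∧ (y : ZMod p) ≠ (2 : ZMod p)⁻¹ ∧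
          (x : ZMod p) + (y : ZMod p) = 1) ∧
        (e = s(((2 * L x + 1 : ℕ) : ZMod (2*(p-1))), ((2 * L y + 1 : ℕ) : ZMod (2*(p-1)))) ∨
         e = s(((2 * L x : ℕ) : ZMod (2*(p-1))), ((2 * L y : ℕ) : ZMod (2*(p-1)))))} ∪
      {s(((2 * r : ℕ) : ZMod (2*(p-1))), ((2 * r + 1 : ℕ) : ZMod (2*(p-1))))}) :
    IsEven2Starter (p - 1) S0 S1 := by
  have hpp : p.Prime := Fact.out
  have hodd : p % 2 = 1 := by
    rcases hpp.eq_two_or_odd with h | h <;> omega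
  obtain ⟨M, hM⟩ : ∃ M, p - 1 = 2 * M := ⟨(p-1)/2, by omega⟩
  have hord : orderOf g = p - 1 := by
    rw [orderOf_eq_card_of_forall_mem_zpowers hg, Nat.card_eq_fintype_card, ZMod.card_units]
  have ginj : ∀ i j, i < p - 1 → j < p - 1 → g ^ i = g ^ j → i = j := by
    intro i j hi hj h
    rw [pow_eq_pow_iff_modEq, hord] at h
    exact Nat.ModEq.eq_of_lt_of_lt h hi hj
  have gM : g ^ M = -1 := by
    have h1 : (g ^ M) ^ 2 = 1 := by
      rw [← pow_mul, mul_comm, ← hM, ← hord, pow_orderOf_eq_one]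
    have h2 : g ^ M ≠ 1 := by
      intro h
      have := ginj M 0 (by omega) (by omega) (by simpa using h)
      omega
    have h3 : ((g ^ M : (ZMod p)ˣ) : ZMod p) ^ 2 = 1 := by
      rw [← Units.val_pow_eq_pow_val, h1]; simp
    rcases mul_self_eq_one_iff.1 ((sq _).symm.trans h3) with h | h
    · exact absurd (Units.ext h) h2
    · exact Units.ext (by simpa using h)
  have two_ne : (2 : ZMod p) ≠ 0 := by
    intro h
    have : ((2 : ℕ) : ZMod p) = 0 := by exact_mod_cast h
    rw [ZMod.natCast_eq_zero_iff] at this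
    have := Nat.le_of_dvd (by norm_num) this
    omega
  have hgL : ∀ k y, L (g ^ k * y) ≡ L y + k [MOD (p-1)] := by
    intro k y
    rw [← hord, ← pow_eq_pow_iff_modEq, (hL _).2, pow_add, (hL _).2, mul_comm]
  have Lnd : ∀ x, x ≠ 1 → ¬ (p - 1) ∣ L x := by
    intro x hx h
    apply hx
    rw [← (hL x).2, ← orderOf_dvd_iff_pow_eq_one, hord]; exact h
  -- solutions
  have ex0 : ∀ k, ∃ y : (ZMod p)ˣ, k ∈ Finset.Icc 1 (p-1-1) →
      ((g ^ k * y : (ZMod p)ˣ) : ZMod p) = y + 1 := by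
    intro k
    by_cases hk : k ∈ Finset.Icc 1 (p-1-1)
    · have hk' := Finset.mem_Icc.1 hk
      have hne : ((g ^ k : (ZMod p)ˣ) : ZMod p) - 1 ≠ 0 := by
        intro h
        have := ginj k 0 (by omega) (by omega) (by
          rw [pow_zero]; exact Units.ext (by rw [sub_eq_zero.1 h]; simp))
        omega
      refine ⟨(Units.mk0 _ hne)⁻¹, fun _ => ?_⟩
      have := Units.mul_inv (Units.mk0 _ hne)
      rw [Units.val_mk0] at this
      rw [Units.val_mul]
      linear_combination this
    · exact ⟨1, fun h => absurd h hk⟩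
  choose Y hY using ex0
  have ex1 : ∀ k, ∃ y : (ZMod p)ˣ, k ∈ Finset.Icc 1 (M-1) →
      ((g ^ k * y : (ZMod p)ˣ) : ZMod p) + y = 1 := by
    intro k
    by_cases hk : k ∈ Finset.Icc 1 (M-1)
    · have hk' := Finset.mem_Icc.1 hk
      have hne : ((g ^ k : (ZMod p)ˣ) : ZMod p) + 1 ≠ 0 := by
        intro h
        have := ginj k M (by omega) (by omega) (by
          rw [gM]; exact Units.ext (by rw [eq_neg_of_add_eq_zero_left h]; simp))
        omega
      refine ⟨(Units.mk0 _ hne)⁻¹, fun _ => ?_⟩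
      have := Units.mul_inv (Units.mk0 _ hne)
      rw [Units.val_mk0] at this
      rw [Units.val_mul]
      linear_combination this
    · exact ⟨1, fun h => absurd h hk⟩
  choose Z hZ using ex1
  have sum_ne : ∀ x y : (ZMod p)ˣ, (x : ZMod p) + y = 1 → x ≠ 1 ∧ y ≠ 1 := by
    intro x y h
    constructor
    · rintro rfl
      exact y.ne_zero (by simpa using h)
    · rintro rfl
      exact x.ne_zero (by simpa using h)
  have evc : ∀ k y, ((2 * L (g ^ k * y) : ℕ) : ZMod (2*(p-1))) =
      ((2 * (L y + k) : ℕ) : ZMod (2*(p-1))) := fun k y => S16.cast_two' (hgL k y)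
  have odc : ∀ k y, ((2 * L (g ^ k * y) + 1 : ℕ) : ZMod (2*(p-1))) =
      ((2 * (L y + k) + 1 : ℕ) : ZMod (2*(p-1))) := fun k y => by
    rw [Nat.cast_add, evc, ← Nat.cast_add]
  -- good pairs parametrization
  have half : ∀ k ∈ Finset.Icc 1 (M-1), ((g ^ k * Z k : (ZMod p)ˣ) : ZMod p) ≠ (2:ZMod p)⁻¹ ∧
      ((Z k : (ZMod p)ˣ) : ZMod p) ≠ (2:ZMod p)⁻¹ := by
    intro k hk
    have hk' := Finset.mem_Icc.1 hk
    have hz := hZ k hk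
    have hinv := mul_inv_cancel₀ two_ne
    have main : ((g ^ k * Z k : (ZMod p)ˣ) : ZMod p) ≠ (Z k : (ZMod p)ˣ) := by
      intro h
      have h1 := Units.ext h
      have := ginj k 0 (by omega) (by omega) (by
        rw [pow_zero]; exact mul_eq_right.1 h1)
      omega
    constructor
    · intro h
      apply main
      linear_combination -hz + 2 * h + hinv
    · intro h
      apply main
      linear_combination hz - 2 * h - hinv
  have param : ∀ x y : (ZMod p)ˣ, (x : ZMod p) ≠ (2:ZMod p)⁻¹ → (x : ZMod p) + y = 1 →
      ∃ k ∈ Finset.Icc 1 (M-1), (x = g ^ k * Z k ∧ y = Z k) ∨ (y = g ^ k * Z k ∧ x = Z k) := by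
    intro x y hx hxy
    have hinv := mul_inv_cancel₀ two_ne
    have hxy' : x ≠ y := by
      rintro rfl
      apply hx
      apply mul_left_cancel₀ two_ne
      rw [hinv, ← hxy]; ring
    have uniq : ∀ k ∈ Finset.Icc 1 (M-1), ∀ x y : (ZMod p)ˣ, (x : ZMod p) + y = 1 → x = g ^ k * y →
        x = g ^ k * Z k ∧ y = Z k := by
      intro k hk x y h1 h2
      have hz := hZ k hk
      have : y = Z k := by
        apply Units.ext
        rw [h2] at h1
        rw [Units.val_mul] at h1 hz
        have hne : ((g ^ k : (ZMod p)ˣ) : ZMod p) + 1 ≠ 0 := by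
          intro h
          apply one_ne_zero (α := ZMod p)
          rw [← h1]; linear_combination (y : ZMod p) * h
        apply mul_left_cancel₀ hne
        linear_combination h1 - hz
      exact ⟨by rw [h2, this], this⟩
    have hj := hL (x * y⁻¹)
    set j := L (x * y⁻¹) with hjd
    have hxj : x = g ^ j * y := by rw [hj.2]; simp
    have j0 : j ≠ 0 := by
      intro h; rw [h] at hxj; exact hxy' (by simpa using hxj)
    have jM : j ≠ M := by
      intro h; rw [h, gM] at hxj
      rw [hxj] at hxy
      simp at hxy
    by_cases hlt : j < M
    · exact ⟨j, by simp; omega, .inl (uniq j (by simp; omega) x y hxy hxj)⟩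
    · refine ⟨p - 1 - j, by simp; omega, .inr (uniq _ (by simp; omega) y x ?_ ?_)⟩
      · rw [add_comm]; exact hxy
      · rw [hxj, ← mul_assoc, ← pow_add, Nat.sub_add_cancel (by omega), ← hord,
          pow_orderOf_eq_one, one_mul]
  apply S16.core (p-1) (by omega) M hM (fun k => L (Y k)) (fun k => L (Z k)) r
  · intro k hk h
    have hne : g ^ k * Y k ≠ 1 := by
      intro h1
      have h2 := hY k hk
      rw [h1] at h2
      exact (Y k).ne_zero (by simpa using h2)
    apply Lnd _ hne
    rw [← Nat.modEq_zero_iff_dvd] at h ⊢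
    exact (hgL k (Y k)).trans h
  · intro k hk
    obtain ⟨h1, h2⟩ := sum_ne _ _ (hZ k hk)
    refine ⟨fun h => ?_, Lnd _ h2⟩
    apply Lnd _ h1
    rw [← Nat.modEq_zero_iff_dvd] at h ⊢
    exact (hgL k (Z k)).trans h
  · intro h
    have := Nat.le_of_dvd (by omega) h
    omega
  · intro e
    rw [hS0, Set.mem_ofPred_eq]
    constructor
    · rintro ⟨x, y, hx, hxy, rfl⟩
      have hj := hL (x * y⁻¹)
      set j := L (x * y⁻¹) with hjd
      have hxj : x = g ^ j * y := by rw [hj.2]; simp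
      have j0 : j ≠ 0 := by
        intro h; rw [h] at hxj
        rw [hxj] at hxy
        simp at hxy
      have hjm : j ∈ Finset.Icc 1 (p-1-1) := by simp; omega
      refine ⟨j, hjm, ?_⟩
      have : y = Y j := by
        have hz := hY j hjm
        apply Units.ext
        rw [hxj] at hxy
        rw [Units.val_mul] at hxy hz
        have hne : ((g ^ j : (ZMod p)ˣ) : ZMod p) - 1 ≠ 0 := by
          intro h
          apply one_ne_zero (α := ZMod p)
          linear_combination (y : ZMod p) * h - hxy
        apply mul_left_cancel₀ hne
        linear_combination hxy - hz
      rw [← this, ← evc, ← hxj]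
    · rintro ⟨k, hk, rfl⟩
      have hy := hY k hk
      refine ⟨g ^ k * Y k, Y k, ?_, hy, by rw [evc]⟩
      intro h1
      rw [h1] at hy
      exact (Y k).ne_zero (by simpa using hy)
  · intro e
    rw [hS1, Set.mem_union, Set.mem_ofPred_eq, Set.mem_singleton_iff]
    refine or_congr_left ?_
    constructor
    · rintro ⟨x, y, ⟨hx1, hy1, hx2, hy2, hxy⟩, he⟩
      obtain ⟨k, hk, ⟨h1, h2⟩ | ⟨h1, h2⟩⟩ := param x y hx2 hxy
      · refine ⟨k, hk, ?_⟩
        rw [← evc, ← odc, ← h1, ← h2]; exact he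
      · refine ⟨k, hk, ?_⟩
        rw [← evc, ← odc, ← h1, ← h2, Sym2.eq_swap, Sym2.eq_swap (a := ((2 * L y : ℕ) : ZMod (2*(p-1))))]
        exact he
    · rintro ⟨k, hk, he⟩
      obtain ⟨h1, h2⟩ := sum_ne _ _ (hZ k hk)
      obtain ⟨h3, h4⟩ := half k hk
      refine ⟨g ^ k * Z k, Z k, ⟨h1, h2, h3, h4, hZ k hk⟩, ?_⟩
      rw [evc, odc]; exact he
end

section
/- Let p ≥ 5 be a prime, g a generator of (ℤ/pℤ)ˣ, and define (S₀,S₁) in Z_{2(p−1)} = ℤ/2(p−1)ℤ by S₀ = {{2ℓ(x), 2ℓ(x−1)+1} : x ∈ (ℤ/pℤ)ˣ, x ≠ 1} and S₁ = {{2ℓ(x)+1, 2ℓ(y)+1} : x,y ∈ (ℤ/pℤ)ˣ \ {1, 2⁻¹}, x+y = 1} ∪ {{2ℓ(x), 2ℓ(y)} : x,y ∈ (ℤ/pℤ)ˣ \ {1, 2⁻¹}, x+y = 1} ∪ {{2r̄, 2r̄+1}}, where ℓ(x) ∈ {0,…,p−2} is the unique integer with g^{ℓ(x)} = x and r̄ ∈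 {1,…,p−2} is the unique nonzero residue modulo p−1 not occurring in {{ℓ(x), ℓ(y)} : x,y ∈ (ℤ/pℤ)ˣ \ {1, 2⁻¹}, x+y = 1}. Then the induced column family C_i = {{x+2⌊ī/2⌋, y+2⌊ī/2⌋} : {x,y} ∈ S_{ī mod 2}} for i ∈ Z_{2(p−1)} satisfies the quasi-C-code condition: for all m ≠ k in Z_{2(p−1)}, C_m ∩ C_k = ∅, the simple graph on vertex set Z_{2(p−1)} with edge set C_m ∪ C_k contains no cycle, and m and k lie in different connected components of that graph. (This gives a quasi-C-code of length 2(p−1).) -/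
def MM (p : ℕ) (a w : ZMod p × ZMod 2) : ZMod p × ZMod 2 :=
  if a.2 = 0 then (if w.2 = 0 then (w.1 - a.1, 1) else (w.1 + a.1, 0))
  else if 2 * w.1 = a.1 then (w.1, w.2 + 1) else (a.1 - w.1, w.2)

theorem zmod2_cases (x : ZMod 2) : x = 0 ∨ x = 1 := by
  revert x; decide

theorem val_V2 (p : ℕ) [Fact p.Prime] (hp : 5 ≤ p) (s : ZMod p) :
    ((-s - 1).val : ZMod 2) = s.val := by
  have hodd : p % 2 = 1 := by
    rcases (Fact.out : p.Prime).eq_two_or_odd with h | h <;> omega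
  have hs := ZMod.val_lt s
  have h1 : -s - 1 = ((p - 1 - s.val : ℕ) : ZMod p) := by
    have : ((p - 1 - s.val : ℕ) : ZMod p) + (s.val : ZMod p) + 1 = (p : ZMod p) := by
      rw [← Nat.cast_add, ← Nat.cast_succ]; congr 1; omega
    rw [ZMod.natCast_self, ZMod.natCast_zmod_val] at this
    linear_combination -this
  rw [h1, ZMod.val_natCast, Nat.mod_eq_of_lt (by omega)]
  rw [ZMod.natCast_eq_natCast_iff]
  unfold Nat.ModEq
  omega

theorem val_V1 (p : ℕ) [Fact p.Prime] (hp : 5 ≤ p) (s : ZMod p) (h0 : s ≠ 0) :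
    ((-s).val : ZMod 2) = s.val + 1 := by
  have hodd : p % 2 = 1 := by
    rcases (Fact.out : p.Prime).eq_two_or_odd with h | h <;> omega
  have hs := ZMod.val_lt s
  rw [ZMod.neg_val, if_neg h0, ← Nat.cast_succ, ZMod.natCast_eq_natCast_iff]
  unfold Nat.ModEq
  omega

theorem val_V3 (p : ℕ) [Fact p.Prime] (hp : 5 ≤ p) (s : ZMod p) (h0 : s ≠ -1) :
    ((-s - 2).val : ZMod 2) = s.val + 1 := by
  have h1 := val_V2 p hp (s + 1)
  have h2 := val_V1 p hp (-s - 1) (fun h => h0 (by linear_combination -h))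
  rw [val_V2 p hp] at h2
  rw [← h2]
  rw [show -(-s - 1) = s + 1 by ring, ← h1]
  congr 2; ring

def Good (p : ℕ) (m k : ZMod p × ZMod 2) : Prop :=
  ∃ f : ZMod p × ZMod 2 → ZMod p × ZMod 2, Function.Injective f ∧
    ∀ w, ∃ δ : ZMod p × ZMod 2, (δ = 1 ∨ δ = -1) ∧ f (MM p m w) = f w + δ ∧
      f (MM p k w) = f w - δ

theorem Good.symm {p : ℕ} {m k : ZMod p × ZMod 2} (h : Good p m k) : Good p k m := by
  obtain ⟨f, hf, h⟩ := h
  refine ⟨f, hf, fun w => ?_⟩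
  obtain ⟨δ, h1, h2, h3⟩ := h w
  refine ⟨-δ, ?_, ?_, ?_⟩
  · rcases h1 with rfl | rfl <;> simp
  · rw [h3]; ring
  · rw [h2]; ring

theorem two_ne (p : ℕ) [Fact p.Prime] (hp : 5 ≤ p) : (2 : ZMod p) ≠ 0 := by
  intro h
  have : ((2 : ℕ) : ZMod p) = 0 := by exact_mod_cast h
  rw [ZMod.natCast_eq_zero_iff] at this
  have := Nat.le_of_dvd (by norm_num) this
  omega

theorem good00 (p : ℕ) [Fact p.Prime] (hp : 5 ≤ p) (a b : ZMod p) (hab : a ≠ b) :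
    Good p (a, 0) (b, 0) := by
  have h2 := two_ne p hp
  have hd : b - a ≠ 0 := sub_ne_zero.2 hab.symm
  refine ⟨fun w => if w.2 = 0 then (2 * w.1 / (b - a), 0) else
    (2 * (w.1 + a) / (b - a) + 1, 1), ?_, ?_⟩
  · rintro ⟨u, e⟩ ⟨u', e'⟩ h
    rcases zmod2_cases e with rfl | rfl <;> rcases zmod2_cases e' with rfl | rfl <;>
      simp [hd, h2, div_left_inj' hd] at h ⊢ <;> assumption
  · rintro ⟨u, e⟩
    rcases zmod2_cases e with rfl | rfl
    · refine ⟨1, Or.inl rfl, ?_, ?_⟩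
      · ext <;> simp [MM]
      · ext
        · simp [MM]; field_simp; ring
        · simp [MM]
    · refine ⟨-1, Or.inr rfl, ?_, ?_⟩
      · ext
        · simp [MM]
        · simp [MM]; decide
      · ext
        · simp [MM]; field_simp; ring
        · simp [MM]; decide

/-- A general cyclic coordinate. -/
def FF (p : ℕ) (c : ZMod p) (s : ZMod p) (e : ZMod 2) : ZMod p × ZMod 2 :=
  if e + (s.val : ZMod 2) = 0 then (c * s, 0) else (-(c * s) - 1, 1)

theorem FF_inj (p : ℕ) [Fact p.Prime] (c : ZMod p) (hc : c ≠ 0) (s s' : ZMod p) (e e' : ZMod 2)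
    (h : FF p c s e = FF p c s' e') : s = s' ∧ e = e' := by
  unfold FF at h
  have hs : s = s' := by
    split_ifs at h <;> simp [hc] at h <;> exact h
  subst hs
  refine ⟨rfl, ?_⟩
  generalize ((s.val : ℕ) : ZMod 2) = x at h
  rcases zmod2_cases x with rfl | rfl <;> rcases zmod2_cases e with rfl | rfl <;>
    rcases zmod2_cases e' with rfl | rfl <;> simp [show (1:ZMod 2)+1=0 from by decide] at h ⊢

theorem FF_stepA (p : ℕ) (c : ZMod p) (s s' : ZMod p) (e e' : ZMod 2)
    (hq : e' + (s'.val : ZMod 2) = e + (s.val : ZMod 2) + 1) (hs : c * s' = -(c * s)) :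
    FF p c s' e' = FF p c s e + (if e + (s.val : ZMod 2) = 0 then -1 else 1) := by
  unfold FF
  rw [hq]
  have h11 : (1:ZMod 2) + 1 = 0 := by decide
  have hm1 : (-1:ZMod 2) = 1 := by decide
  rcases zmod2_cases (e + (s.val : ZMod 2)) with h | h <;>
    rw [h] <;> ext <;> simp [hs, h11, hm1] <;> ring

theorem FF_stepB (p : ℕ) (c : ZMod p) (s s' : ZMod p) (e e' : ZMod 2)
    (hq : e' + (s'.val : ZMod 2) = e + (s.val : ZMod 2) + 1) (hs : c * s' = -(c * s) - 2) :
    FF p c s' e' = FF p c s e - (if e + (s.val : ZMod 2) = 0 then -1 else 1) := by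
  unfold FF
  rw [hq]
  have h11 : (1:ZMod 2) + 1 = 0 := by decide
  have hm1 : (-1:ZMod 2) = 1 := by decide
  rcases zmod2_cases (e + (s.val : ZMod 2)) with h | h <;>
    rw [h] <;> ext <;> simp [hs, h11, hm1] <;> ring

theorem val_m1 (p : ℕ) [Fact p.Prime] (hp : 5 ≤ p) : ((-1 : ZMod p).val : ZMod 2) = 0 := by
  have := val_V2 p hp 0
  simpa using this

theorem good11 (p : ℕ) [Fact p.Prime] (hp : 5 ≤ p) (a b : ZMod p) (hab : a ≠ b) :
    Good p (a, 1) (b, 1) := by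
  have h2 := two_ne p hp
  have hd : b - a ≠ 0 := sub_ne_zero.2 hab.symm
  refine ⟨fun w => FF p 1 ((a - 2 * w.1) / (b - a)) w.2, ?_, ?_⟩
  · rintro ⟨u, e⟩ ⟨u', e'⟩ h
    obtain ⟨h1, h3⟩ := FF_inj p 1 one_ne_zero _ _ _ _ h
    simp only [div_left_inj' hd, sub_right_inj, mul_right_inj' h2] at h1 h3
    rw [h1, h3]
  · rintro ⟨u, e⟩
    refine ⟨if e + ((((a - 2 * u) / (b - a)).val : ℕ) : ZMod 2) = 0 then -1 else 1, ?_, ?_, ?_⟩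
    · split_ifs <;> simp
    · apply FF_stepA
      · by_cases h : 2 * u = a
        · simp [MM, h]
        · simp only [MM, one_ne_zero, if_false, h]
          rw [show (a - 2 * (a - u)) / (b - a) = -((a - 2 * u) / (b - a)) by ring,
            val_V1 p hp]
          · ring
          · exact div_ne_zero (sub_ne_zero.2 (Ne.symm h)) hd
      · by_cases h : 2 * u = a
        · simp [MM, h]
        · simp only [MM, one_ne_zero, if_false, h]
          ring
    · apply FF_stepB
      · by_cases h : 2 * u = b
        · simp [MM, h]; ring
        · simp only [MM, one_ne_zero, if_false, h]
          rw [show (a - 2 * (b - u)) / (b - a) = -((a - 2 * u) / (b - a)) - 2 by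
              field_simp; ring, val_V3 p hp]
          · ring
          · intro h'
            rw [div_eq_iff hd] at h'
            exact h (by linear_combination -h')
      · by_cases h : 2 * u = b
        · simp [MM, h]; field_simp; ring
        · simp only [MM, one_ne_zero, if_false, h]
          field_simp; ring

theorem good01 (p : ℕ) [Fact p.Prime] (hp : 5 ≤ p) (a b : ZMod p) (ha : a ≠ 0) :
    Good p (b, 1) (a, 0) := by
  have h2 := two_ne p hp
  have hd : 2 * a ≠ 0 := mul_ne_zero h2 ha
  have h11 : (1:ZMod 2) + 1 = 0 := by decide
  refine ⟨fun w => FF p 2 ((if w.2 = 0 then (b - 2 * w.1) else (2 * w.1 - b)) / (2 * a)) w.2,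
    ?_, ?_⟩
  · rintro ⟨u, e⟩ ⟨u', e'⟩ h
    obtain ⟨h1, h3⟩ := FF_inj p 2 h2 _ _ _ _ h
    simp only at h3
    subst h3
    simp only [div_left_inj' hd] at h1
    split_ifs at h1
    · simp only [sub_right_inj, mul_right_inj' h2] at h1
      rw [h1]
    · simp only [sub_left_inj, mul_right_inj' h2] at h1
      rw [h1]
  · rintro ⟨u, e⟩
    refine ⟨if e + ((((if e = 0 then (b - 2 * u) else (2 * u - b)) / (2 * a)).val : ℕ) : ZMod 2)
      = 0 then -1 else 1, ?_, ?_, ?_⟩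
    · split_ifs <;> simp
    · apply FF_stepA
      · by_cases h : 2 * u = b
        · simp [MM, h]
        · simp only [MM, one_ne_zero, if_false, h]
          rw [show (if e = 0 then (b - 2 * (b - u)) else (2 * (b - u) - b)) / (2 * a) =
            -((if e = 0 then (b - 2 * u) else (2 * u - b)) / (2 * a)) by split_ifs <;> ring,
            val_V1 p hp]
          · ring
          · refine div_ne_zero ?_ hd
            split_ifs
            · exact sub_ne_zero.2 (Ne.symm h)
            · exact sub_ne_zero.2 h
      · by_cases h : 2 * u = b
        · simp [MM, h]
        · simp only [MM, one_ne_zero, if_false, h]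
          split_ifs <;> ring
    · rcases zmod2_cases e with rfl | rfl
      · apply FF_stepB
        · simp only [MM, one_ne_zero, if_false, if_true]
          rw [show (2 * (u - a) - b) / (2 * a) = -((b - 2 * u) / (2 * a)) - 1 by
            field_simp; ring, val_V2 p hp]
          ring
        · simp only [MM, one_ne_zero, if_false, if_true]
          field_simp; ring
      · apply FF_stepB
        · simp only [MM, one_ne_zero, if_false, if_true]
          rw [show (b - 2 * (u + a)) / (2 * a) = -((2 * u - b) / (2 * a)) - 1 by
            field_simp; ring, val_V2 p hp]
          linear_combination -h11
        · simp only [MM, one_ne_zero, if_false, if_true]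
          field_simp; ring

theorem good_all (p : ℕ) [Fact p.Prime] (hp : 5 ≤ p) (m k : ZMod p × ZMod 2)
    (hm : m.1 ≠ 0) (hk : k.1 ≠ 0) (hmk : m ≠ k) : Good p m k := by
  obtain ⟨a, e⟩ := m
  obtain ⟨b, e'⟩ := k
  rcases zmod2_cases e with rfl | rfl <;> rcases zmod2_cases e' with rfl | rfl
  · exact good00 p hp a b (fun h => hmk (by rw [h]))
  · exact (good01 p hp a b hm).symm
  · exact good01 p hp b a hk
  · exact good11 p hp a b (fun h => hmk (by rw [h]))

theorem path_bridge {V : Type*} (G : SimpleGraph V) (f : V → ℕ) (hf : Function.Injective f)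
    (h : ∀ v w, G.Adj v w → f w = f v + 1 ∨ f v = f w + 1) (u v : V) (huv : f v = f u + 1) :
    ¬ (G \ SimpleGraph.fromEdgeSet {s(u, v)}).Reachable u v := by
  have hlt : ∀ x y, (G \ SimpleGraph.fromEdgeSet {s(u, v)}).Reachable x y → f x ≤ f u →
      f y ≤ f u := by
    rintro x y ⟨q⟩ hx
    induction q with
    | nil => exact hx
    | cons h' q ih =>
      apply ih
      rename_i x y z
      by_contra hy
      rw [SimpleGraph.sdiff_adj] at h'
      have h1 := h _ _ h'.1
      have hxu : x = u := hf (by omega)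
      have hyv : y = v := hf (by omega)
      subst hxu hyv
      apply h'.2
      simp [h'.1.ne]
  intro hr
  have := hlt u v hr le_rfl
  omega

theorem path_acyclic {V : Type*} (G : SimpleGraph V) (f : V → ℕ) (hf : Function.Injective f)
    (h : ∀ v w, G.Adj v w → f w = f v + 1 ∨ f v = f w + 1) : G.IsAcyclic := by
  rw [SimpleGraph.isAcyclic_iff_forall_adj_isBridge]
  intro u v huv
  rw [SimpleGraph.isBridge_iff]
  rcases h u v huv with h1 | h1
  · exact path_bridge G f hf h u v h1
  · rw [Sym2.eq_swap]
    exact fun hr => path_bridge G f hf h v u h1 hr.symm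

theorem cyc_abs {V : Type*} (N : ℕ) [NeZero N] (G : SimpleGraph V) (f : V → ZMod N)
    (hf : Function.Injective f)
    (hadj : ∀ v w, G.Adj v w → f w = f v + 1 ∨ f v = f w + 1)
    (c d : ZMod N) (hcd : c ≠ d) (hc : ∀ v, f v ≠ c) (hd : ∀ v, f v ≠ d)
    (m k : V) (hm : f m = c + 1) (hk : f k = c - 1) :
    G.IsAcyclic ∧ ¬ G.Reachable m k := by
  have key : ∀ x y : ZMod N, y ≠ c → y = x + 1 → (y - c).val = (x - c).val + 1 := by
    rintro x y hy rfl
    have h1 : x + 1 - c = ((x - c).val + 1 : ℕ) := by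
      push_cast; rw [ZMod.natCast_zmod_val]; ring
    have hlt := ZMod.val_lt (x - c)
    have : (x - c).val + 1 ≠ N := by
      intro h
      rw [h, ZMod.natCast_self] at h1
      exact hy (sub_eq_zero.1 h1)
    rw [h1, ZMod.val_natCast, Nat.mod_eq_of_lt (by omega)]
  have hstep : ∀ v w, G.Adj v w → (f w - c).val = (f v - c).val + 1 ∨
      (f v - c).val = (f w - c).val + 1 := by
    intro v w h
    rcases hadj v w h with h | h
    · exact Or.inl (key _ _ (hc w) h)
    · exact Or.inr (key _ _ (hc v) h)
  have hvi : ∀ x y : ZMod N, (x - c).val = (y - c).val → x = y := by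
    intro x y h
    have := ZMod.val_injective N h
    simpa using this
  refine ⟨path_acyclic G (fun v => (f v - c).val) (fun v w h => hf (hvi _ _ h)) hstep, ?_⟩
  have hlt : ∀ v w, G.Reachable v w → (f v - c).val < (d - c).val → 
      (f w - c).val < (d - c).val := by
    rintro v w ⟨q⟩ h
    induction q with
    | nil => exact h
    | cons h' q ih =>
      apply ih
      rename_i x y z
      have h1 := hstep _ _ h'
      have h2 : (f y - c).val ≠ (d - c).val := fun h => hd _ (hvi _ _ h)
      omega
  intro hr
  have hd0 : (d - c).val ≠ 0 := by
    rw [Ne, ZMod.val_eq_zero, sub_eq_zero]; exact hcd.symm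
  have h1 := key c (f m) (hc _) hm
  have h2 : (f m - c).val ≠ (d - c).val := fun h => hd _ (hvi _ _ h)
  rw [sub_self, ZMod.val_zero] at h1
  have h3 := hlt m k hr (by omega)
  have h4 : (f k - c) = ((N - 1 : ℕ) : ZMod N) := by
    rw [hk, Nat.cast_sub (NeZero.pos N)]; simp
  have h5 := ZMod.val_lt (d - c)
  rw [h4, ZMod.val_natCast, Nat.mod_eq_of_lt (by omega)] at h3
  omega

theorem fin_abs {V : Type*} (p : ℕ) [Fact p.Prime] (hp : 5 ≤ p) (ι : V → ZMod p × ZMod 2)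
    (hι : Function.Injective ι) (hι0 : ∀ v, (ι v).1 ≠ 0) (m k : V) (hmk : m ≠ k)
    (A B : Set (Sym2 V))
    (hA : ∀ e ∈ A, ∀ v w, e = s(v, w) → ι w = MM p (ι m) (ι v))
    (hB : ∀ e ∈ B, ∀ v w, e = s(v, w) → ι w = MM p (ι k) (ι v)) :
    A ∩ B = ∅ ∧ (SimpleGraph.fromEdgeSet (A ∪ B)).IsAcyclic ∧
      ¬ (SimpleGraph.fromEdgeSet (A ∪ B)).Reachable m k := by
  have hodd : p % 2 = 1 := by
    rcases (Fact.out : p.Prime).eq_two_or_odd with h | h <;> omega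
  have h2 := two_ne p hp
  obtain ⟨f, hf, hstep⟩ := good_all p hp (ι m) (ι k) (hι0 m) (hι0 k) (fun h => hmk (hι h))
  have hcop : Nat.Coprime p 2 := by
    exact Nat.coprime_two_right.2 (Nat.odd_iff.2 hodd)
  let E := (ZMod.chineseRemainder hcop).symm
  have hM : ∀ v : V, MM p (ι v) (0, 1) = ι v := by
    intro v
    have h0 := hι0 v
    rcases hv : ι v with ⟨a, e⟩
    rw [hv] at h0
    rcases zmod2_cases e with rfl | rfl
    · simp [MM]
    · simp [MM, Ne.symm h0]
  haveI : NeZero (p * 2) := ⟨by omega⟩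
  refine ⟨?_, ?_⟩
  · ext e
    simp only [Set.mem_inter_iff, Set.mem_empty_iff_false, iff_false, not_and]
    intro h1 h3
    induction e with
    | _ v w =>
      have e1 := hA _ h1 v w rfl
      have e2 := hB _ h3 v w rfl
      obtain ⟨δ, h4, h5, h6⟩ := hstep (ι v)
      rw [← e1] at h5
      rw [← e2, h5] at h6
      have h7 : δ.1 + δ.1 = 0 := by
        have := congrArg Prod.fst h6
        simp only [Prod.fst_add, Prod.fst_sub] at this
        linear_combination this
      rw [← two_mul] at h7
      rcases h4 with rfl | rfl <;> simp [h2] at h7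
  · obtain ⟨δ, h4, h5, h6⟩ := hstep (0, 1)
    rw [hM] at h5 h6
    have hadj : ∀ v w, (SimpleGraph.fromEdgeSet (A ∪ B)).Adj v w →
        f (ι w) = f (ι v) + 1 ∨ f (ι v) = f (ι w) + 1 := by
      intro v w h
      rw [SimpleGraph.fromEdgeSet_adj] at h
      obtain ⟨δ, h4, h5, h6⟩ := hstep (ι v)
      rcases h.1 with h | h
      · rw [← hA _ h v w rfl] at h5
        rcases h4 with rfl | rfl
        · exact Or.inl h5
        · right; rw [h5]; ring
      · rw [← hB _ h v w rfl] at h6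
        rcases h4 with rfl | rfl
        · right; rw [h6]; ring
        · left; rw [h6]; ring
    have hadj' : ∀ v w, (SimpleGraph.fromEdgeSet (A ∪ B)).Adj v w →
        E (f (ι w)) = E (f (ι v)) + 1 ∨ E (f (ι v)) = E (f (ι w)) + 1 := by
      intro v w h
      rcases hadj v w h with h | h
      · left; rw [h, map_add, map_one]
      · right; rw [h, map_add, map_one]
    have hinj : Function.Injective (fun v => E (f (ι v))) :=
      E.injective.comp (hf.comp hι)
    have hcd : E (f (0, 1)) ≠ E (f (0, 0)) := by
      intro h
      have := hf (E.injective h)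
      simp at this
    have hmiss : ∀ x : ZMod 2, ∀ v, E (f (ι v)) ≠ E (f (0, x)) := by
      intro x v h
      have := hf (E.injective h)
      exact hι0 v (by rw [this])
    rcases h4 with rfl | rfl
    · exact cyc_abs (p * 2) _ (fun v => E (f (ι v))) hinj hadj' _ _ hcd (hmiss 1) (hmiss 0) m k
        (by simp only [h5, map_add, map_one]) (by simp only [h6, map_sub, map_one])
    · obtain ⟨r1, r2⟩ := cyc_abs (p * 2) _ (fun v => E (f (ι v))) hinj hadj' _ _ hcd
        (hmiss 1) (hmiss 0) k m
        (by simp only [h6, sub_neg_eq_add, map_add, map_one])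
        (by simp only [h5, map_add, map_neg, map_one]; ring)
      exact ⟨r1, fun h => r2 h.symm⟩

/-- The vertex map. -/
def iota (p : ℕ) (g : (ZMod p)ˣ) (v : ZMod (2 * (p - 1))) : ZMod p × ZMod 2 :=
  (((g ^ (v.val / 2) : (ZMod p)ˣ) : ZMod p), (v.val : ZMod 2))

theorem iota_nat (p : ℕ) [Fact p.Prime] (g : (ZMod p)ˣ) (n : ℕ) :
    iota p g (n : ZMod (2 * (p - 1))) = (((g ^ (n / 2) : (ZMod p)ˣ) : ZMod p), (n : ZMod 2)) := by
  have hg : g ^ (p - 1) = 1 := ZMod.units_pow_card_sub_one_eq_one p g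
  unfold iota
  rw [ZMod.val_natCast]
  have h := Nat.div_add_mod n (2 * (p - 1))
  set q := n / (2 * (p - 1))
  set t := n % (2 * (p - 1))
  have h1 : n / 2 = (p - 1) * q + t / 2 := by
    rw [← h, mul_assoc]; omega
  rw [h1, pow_add, pow_mul, hg, one_pow, one_mul]
  congr 1
  rw [← h]
  push_cast
  rw [show (2 : ZMod 2) = 0 by decide]
  ring

theorem iota_nat2 (p : ℕ) [Fact p.Prime] (g : (ZMod p)ˣ) (n j : ℕ) (x : (ZMod p)ˣ)
    (hx : g ^ n = x) :
    iota p g (((2 * n : ℕ) : ZMod (2 * (p - 1))) + ((2 * j : ℕ) : ZMod (2 * (p - 1)))) =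
      ((x : ZMod p) * ((g ^ j : (ZMod p)ˣ) : ZMod p), 0) ∧
    iota p g (((2 * n + 1 : ℕ) : ZMod (2 * (p - 1))) + ((2 * j : ℕ) : ZMod (2 * (p - 1)))) =
      ((x : ZMod p) * ((g ^ j : (ZMod p)ˣ) : ZMod p), 1) := by
  rw [← Nat.cast_add, ← Nat.cast_add, iota_nat, iota_nat]
  rw [show (2 * n + 2 * j) / 2 = n + j by omega, show (2 * n + 1 + 2 * j) / 2 = n + j by omega,
    pow_add, hx]
  push_cast
  rw [show (2 : ZMod 2) = 0 by decide]
  simp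

theorem iota_inj (p : ℕ) [Fact p.Prime] (hp : 5 ≤ p) (g : (ZMod p)ˣ)
    (hg : ∀ u : (ZMod p)ˣ, u ∈ Subgroup.zpowers g) : Function.Injective (iota p g) := by
  have ho : orderOf g = p - 1 := by
    rw [orderOf_eq_card_of_forall_mem_zpowers hg, Nat.card_eq_fintype_card, ZMod.card_units]
  haveI : NeZero (2 * (p - 1)) := ⟨by omega⟩
  intro v w h
  have hv := ZMod.val_lt v
  have hw := ZMod.val_lt w
  have h1 := congrArg Prod.fst h
  have h2 := congrArg Prod.snd h
  simp only [iota] at h1 h2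
  rw [ZMod.natCast_eq_natCast_iff] at h2
  unfold Nat.ModEq at h2
  have h3 : v.val / 2 = w.val / 2 :=
    pow_injOn_Iio_orderOf (x := g) (by rw [ho, Set.mem_Iio]; omega)
      (by rw [ho, Set.mem_Iio]; omega) (Units.ext h1)
  exact ZMod.val_injective _ (by omega)

theorem MM_S0 (p : ℕ) (A x y : ZMod p) (h : x = y + 1) :
    (y * A, (1 : ZMod 2)) = MM p (A, 0) (x * A, 0) ∧
    (x * A, (0 : ZMod 2)) = MM p (A, 0) (y * A, 1) := by
  subst h
  constructor <;> ext <;> simp [MM] <;> ring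

theorem MM_S1 (p : ℕ) [Fact p.Prime] (hp : 5 ≤ p) (A x y : ZMod p) (e : ZMod 2) (hA : A ≠ 0)
    (h : x + y = 1) (hx : x ≠ 2⁻¹) :
    (y * A, e) = MM p (A, 1) (x * A, e) := by
  have h2 := two_ne p hp
  have : 2 * (x * A) ≠ A := by
    intro h'
    apply hx
    apply eq_inv_of_mul_eq_one_left
    apply mul_right_cancel₀ hA
    linear_combination h'
  obtain rfl : y = 1 - x := by linear_combination h
  simp [MM, this]; ring

theorem MM_S1' (p : ℕ) [Fact p.Prime] (hp : 5 ≤ p) (A : ZMod p) (e : ZMod 2) :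
    ((2 : ZMod p)⁻¹ * A, e + 1) = MM p (A, 1) ((2 : ZMod p)⁻¹ * A, e) := by
  have h2 := two_ne p hp
  simp [MM, h2]

/-- With `(S₀, S₁)` as in Statement 16, the induced column family
satisfies the quasi-C-code condition, giving a quasi-C-code of length `2(p-1)`. -/
theorem stmt17 (p : ℕ) [Fact p.Prime] (hp : 5 ≤ p)
    (g : (ZMod p)ˣ) (hg : ∀ u : (ZMod p)ˣ, u ∈ Subgroup.zpowers g)
    (L : (ZMod p)ˣ → ℕ) (hL : ∀ x : (ZMod p)ˣ, L x ≤ p - 2 ∧ g ^ (L x) = x)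
    (r : ℕ) (hr1 : 1 ≤ r) (hr2 : r ≤ p - 2)
    (hrmiss : ∀ x y : (ZMod p)ˣ,
      x ≠ 1 → y ≠ 1 → (x : ZMod p) ≠ (2 : ZMod p)⁻¹ → (y : ZMod p) ≠ (2 : ZMod p)⁻¹ →
      (x : ZMod p) + (y : ZMod p) = 1 → r ≠ L x ∧ r ≠ L y)
    (S0 S1 : Set (Sym2 (ZMod (2*(p-1)))))
    (hS0 : S0 = {e | ∃ x y : (ZMod p)ˣ, x ≠ 1 ∧ (x : ZMod p) = (y : ZMod p) + 1 ∧
      e = s(((2 * L x : ℕ) : ZMod (2*(p-1))), ((2 * L y + 1 : ℕ) : ZMod (2*(p-1))))})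
    (hS1 : S1 = {e | ∃ x y : (ZMod p)ˣ,
        (x ≠ 1 ∧ y ≠ 1 ∧ (x : ZMod p) ≠ (2 : ZMod p)⁻¹ ∧ (y : ZMod p) ≠ (2 : ZMod p)⁻¹ ∧
          (x : ZMod p) + (y : ZMod p) = 1) ∧
        (e = s(((2 * L x + 1 : ℕ) : ZMod (2*(p-1))), ((2 * L y + 1 : ℕ) : ZMod (2*(p-1)))) ∨
         e = s(((2 * L x : ℕ) : ZMod (2*(p-1))), ((2 * L y : ℕ) : ZMod (2*(p-1)))))} ∪
      {s(((2 * r : ℕ) : ZMod (2*(p-1))), ((2 * r + 1 : ℕ) : ZMod (2*(p-1))))}) :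
    QuasiCCodeCond (p - 1) S0 S1 := by
  have h2 := two_ne p hp
  have hgr : ((g ^ r : (ZMod p)ˣ) : ZMod p) = 2⁻¹ := by
    by_contra hne
    have ho : orderOf g = p - 1 := by
      rw [orderOf_eq_card_of_forall_mem_zpowers hg, Nat.card_eq_fintype_card, ZMod.card_units]
    have hz1 : g ^ r ≠ 1 := pow_ne_one_of_lt_orderOf (by omega) (by omega)
    have hLr : r = L (g ^ r) := by
      have := hL (g ^ r)
      exact pow_injOn_Iio_orderOf (x := g) (by rw [ho, Set.mem_Iio]; omega)
        (by rw [ho, Set.mem_Iio]; omega) this.2.symm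
    have hy0 : (1 : ZMod p) - ((g ^ r : (ZMod p)ˣ) : ZMod p) ≠ 0 := by
      intro h
      exact hz1 (Units.ext (by rw [Units.val_one]; linear_combination -h))
    refine (hrmiss (g ^ r) (Units.mk0 _ hy0) hz1 ?_ hne ?_ ?_).1 hLr
    · intro h
      have := congrArg Units.val h
      rw [Units.val_mk0, Units.val_one] at this
      exact (g ^ r).ne_zero (by linear_combination -this)
    · rw [Units.val_mk0]
      intro h
      apply hne
      have h3 : (2 : ZMod p) * 2⁻¹ = 1 := mul_inv_cancel₀ h2
      linear_combination -h - h3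
    · rw [Units.val_mk0]; ring
  have hpar : ∀ a : ZMod (2 * (p - 1)), ∀ e ∈ qCol (p - 1) S0 S1 a,
      ∃ v w, e = s(v, w) ∧ iota p g w = MM p (iota p g a) (iota p g v) ∧
        iota p g v = MM p (iota p g a) (iota p g w) := by
    rintro a e ⟨e0, he0, rfl⟩
    set j := a.val / 2 with hj
    have hA : ((g ^ j : (ZMod p)ˣ) : ZMod p) ≠ 0 := Units.ne_zero _
    by_cases hpar : a.val % 2 = 0
    · have ha : iota p g a = (((g ^ j : (ZMod p)ˣ) : ZMod p), 0) := by
        unfold iota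
        rw [(ZMod.natCast_eq_zero_iff a.val 2).2 (Nat.dvd_of_mod_eq_zero hpar)]
      rw [if_pos hpar, hS0] at he0
      obtain ⟨x, y, -, hxy, rfl⟩ := he0
      refine ⟨_, _, Sym2.map_mk _ _ _, ?_⟩
      rw [ha, (iota_nat2 p g (L x) j x (hL x).2).1, (iota_nat2 p g (L y) j y (hL y).2).2]
      exact MM_S0 p _ _ _ hxy
    · have ha : iota p g a = (((g ^ j : (ZMod p)ˣ) : ZMod p), 1) := by
        unfold iota
        rw [show (a.val : ZMod 2) = ((1 : ℕ) : ZMod 2) from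
          (ZMod.natCast_eq_natCast_iff _ _ _).2 (by unfold Nat.ModEq; omega), Nat.cast_one]
      rw [if_neg hpar, hS1] at he0
      rcases he0 with ⟨x, y, ⟨-, -, hx, hy, hxy⟩, rfl | rfl⟩ | rfl
      · refine ⟨_, _, Sym2.map_mk _ _ _, ?_⟩
        rw [ha, (iota_nat2 p g (L x) j x (hL x).2).2, (iota_nat2 p g (L y) j y (hL y).2).2]
        exact ⟨MM_S1 p hp _ _ _ _ hA hxy hx, MM_S1 p hp _ _ _ _ hA (by rw [add_comm, hxy]) hy⟩
      · refine ⟨_, _, Sym2.map_mk _ _ _, ?_⟩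
        rw [ha, (iota_nat2 p g (L x) j x (hL x).2).1, (iota_nat2 p g (L y) j y (hL y).2).1]
        exact ⟨MM_S1 p hp _ _ _ _ hA hxy hx, MM_S1 p hp _ _ _ _ hA (by rw [add_comm, hxy]) hy⟩
      · refine ⟨_, _, Sym2.map_mk _ _ _, ?_⟩
        rw [ha, (iota_nat2 p g r j _ rfl).1, (iota_nat2 p g r j _ rfl).2, hgr]
        have e1 := MM_S1' p hp ((g ^ j : (ZMod p)ˣ) : ZMod p) 0
        have e2 := MM_S1' p hp ((g ^ j : (ZMod p)ˣ) : ZMod p) 1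
        rw [zero_add] at e1
        rw [show (1 : ZMod 2) + 1 = 0 by decide] at e2
        exact ⟨e1, e2⟩
  have hpar' : ∀ a : ZMod (2 * (p - 1)), ∀ e ∈ qCol (p - 1) S0 S1 a,
      ∀ v w, e = s(v, w) → iota p g w = MM p (iota p g a) (iota p g v) := by
    intro a e he v w hvw
    obtain ⟨v', w', h1, h3, h4⟩ := hpar a e he
    rw [h1, Sym2.eq_iff] at hvw
    rcases hvw with ⟨rfl, rfl⟩ | ⟨rfl, rfl⟩
    · exact h3
    · exact h4
  intro a b hab
  exact fin_abs p hp (iota p g) (iota_inj p hp g hg) (fun v => (g ^ (v.val / 2)).ne_zero) a b hab _ _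
    (hpar' a) (hpar' b)
end
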